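/- arXiv:2501.15515 — 6 statements merged into one kernel-verified Lean document; each statement's English description precedes it below -/
import Mathlib

section
/- Let d = (d_1,…,d_n) be a degree sequence (a nonincreasing finite sequence of positive integers with even sum) satisfying d_1 ≤ ∑_{i=2}^n d_i, and let t be a positive integer. Then d is t-tot-graphic if and only if the sequence d ∘ 2^t (obtained by appending t copies of 2 to d) is graphic. -/
/-!
Both directions rest on subdividing and suppressing vertices of degree `2`, one at a time.

* Subdividing one copy of an edge `ab` creates a vertex of degree `2`, changes no other degree,
  and lowers the total multiplicity by one when `ab` was a multiple edge (otherwise it keeps it).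
  Starting from a realization of `d` with total multiplicity at most `t`, `t` subdivisions
  (always of a multiple edge when there is one) lead to a simple realization of `d ∘ 2^t`.
* Conversely, let `w` be a vertex of degree `2`. If its neighbours `a ≠ b` are distinct, replace
  `w` by an edge `ab`; the total multiplicity grows by at most one. If `w` is joined to a single
  vertex `a` by a double edge, then because no degree exceeds the sum of the others there is an
  edge `uv` avoiding `a` and `w`; deleting `w` and replacing `uv` by `au` and `av` restores the
  degree of `a`. This loses the double edge at `w` and gains at most two, so again the total
  multiplicity grows by at most one. Doing this `t` times to a simple realization of `d ∘ 2^t`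
  gives a realization of `d` with total multiplicity at most `t`.

Degree sequences are handled as multisets, so that vertices need no labelling.
-/

/-- A loopless multigraph on vertex set `Fin N`, given by symmetric edge
multiplicities with zero diagonal; `m v u` is the number of parallel edges
between `v` and `u`. -/
structure Multigraph (N : ℕ) where
  m : Fin N → Fin N → ℕ
  symm : ∀ v u, m v u = m u v
  loopless : ∀ v, m v v = 0

namespace Multigraph

variable {N : ℕ}

/-- The degree of a vertex. -/
def deg (H : Multigraph N) (v : Fin N) : ℕ := ∑ u, H.m v u

/-- `H` realizes the sequence `d 1, d 2, …, d n` (1-indexed): the multiset of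
vertex degrees equals the multiset of entries of the sequence. -/
def Realizes (H : Multigraph N) (n : ℕ) (d : ℕ → ℕ) : Prop :=
  Multiset.map H.deg Finset.univ.val = Multiset.map d (Finset.Icc 1 n).val

/-- Total multiplicity: the number of excess edge copies, summed over unordered
pairs of vertices (pairs with multiplicity `0` contribute `0`). -/
def totMult (H : Multigraph N) : ℕ :=
  ∑ v : Fin N, ∑ u ∈ Finset.univ.filter (fun u => v < u), (H.m v u - 1)

/-- Maximum multiplicity: the largest number of parallel edges between any two
vertices. -/
def maxMult (H : Multigraph N) : ℕ :=
  Finset.univ.sup fun p : Fin N × Fin N => H.m p.1 p.2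

/-- All multiplicities are at most `1`, i.e. `H` is a simple graph. -/
def Simple (H : Multigraph N) : Prop := ∀ v u, H.m v u ≤ 1

/-- The underlying simple graph of `H` is bipartite: the vertices can be split
into two classes such that every edge crosses between the classes. -/
def Bipartite (H : Multigraph N) : Prop :=
  ∃ S : Set (Fin N), ∀ v u, 1 ≤ H.m v u → (v ∈ S ↔ u ∉ S)

end Multigraph

/-- The sequence `d 1, …, d n` is graphic: it is realized by a simple graph. -/
def Graphic (n : ℕ) (d : ℕ → ℕ) : Prop :=
  ∃ (N : ℕ) (H : Multigraph N), H.Realizes n d ∧ H.Simple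

/-- The sequence `d 1, …, d n` is `t`-tot-graphic: it has a multigraph
realization with total multiplicity at most `t`. -/
def TotGraphic (t n : ℕ) (d : ℕ → ℕ) : Prop :=
  ∃ (N : ℕ) (H : Multigraph N), H.Realizes n d ∧ H.totMult ≤ t

/-! ### Adding and removing edges and vertices -/

namespace Multigraph

variable {N : ℕ}

theorem ext_m {H K : Multigraph N} (h : ∀ v u, H.m v u = K.m v u) : H = K := by
  cases H; cases K
  congr
  funext v u
  exact h v u

/-- Summing over ordered instead of unordered pairs avoids the order on `Fin N`. -/
theorem two_mul_totMult (H : Multigraph N) :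
    2 * H.totMult = ∑ v, ∑ u, (H.m v u - 1) := by
  have key : ∀ v u : Fin N, H.m v u - 1 =
      (if v < u then H.m v u - 1 else 0) + (if u < v then H.m u v - 1 else 0) := by
    intro v u
    rcases lt_trichotomy v u with h | h | h
    · simp [h, h.le]
    · subst h; simp [H.loopless]
    · simp [h, h.le, H.symm v u]
  have h1 : ∑ v, ∑ u, (H.m v u - 1) = H.totMult + H.totMult := by
    calc ∑ v, ∑ u, (H.m v u - 1)
        = ∑ v, ∑ u, ((if v < u then H.m v u - 1 else 0) +
            (if u < v then H.m u v - 1 else 0)) :=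
          Finset.sum_congr rfl fun v _ => Finset.sum_congr rfl fun u _ => key v u
      _ = H.totMult + H.totMult := by
          simp only [Finset.sum_add_distrib]
          congr 1
          · simp only [totMult, Finset.sum_filter]
          · rw [Finset.sum_comm]
            simp only [totMult, Finset.sum_filter]
  omega

/-- `H` with one more copy of the edge `ab`. -/
def addEdge (H : Multigraph N) (a b : Fin N) (hab : a ≠ b) : Multigraph N where
  m v u := H.m v u + ((if v = a ∧ u = b then 1 else 0) + (if v = b ∧ u = a then 1 else 0))
  symm v u := by
    rw [H.symm v u, add_comm (if v = a ∧ u = b then 1 else 0)]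
    simp only [and_comm]
  loopless v := by
    have h1 : ¬ (v = a ∧ v = b) := fun h => hab (h.1.symm.trans h.2)
    have h2 : ¬ (v = b ∧ v = a) := fun h => hab (h.2.symm.trans h.1)
    simp [h1, h2, H.loopless]

theorem deg_addEdge (H : Multigraph N) (a b : Fin N) (hab : a ≠ b) (v : Fin N) :
    (H.addEdge a b hab).deg v = H.deg v + (if v = a then 1 else 0) + (if v = b then 1 else 0) := by
  simp [deg, addEdge, Finset.sum_add_distrib, ite_and, add_assoc]

theorem totMult_addEdge (H : Multigraph N) (a b : Fin N) (hab : a ≠ b) :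
    (H.addEdge a b hab).totMult = H.totMult + (if 1 ≤ H.m a b then 1 else 0) := by
  set c : ℕ := if 1 ≤ H.m a b then 1 else 0 with hc
  have key : ∀ v u : Fin N, (H.addEdge a b hab).m v u - 1 = (H.m v u - 1) +
      ((if v = a ∧ u = b then c else 0) + (if v = b ∧ u = a then c else 0)) := by
    intro v u
    have hs := H.symm a b
    simp only [addEdge, hc]
    by_cases h1 : v = a ∧ u = b
    · have h2 : ¬ (v = b ∧ u = a) := fun h => hab (h1.1.symm.trans h.1)
      obtain ⟨rfl, rfl⟩ := h1
      simp only [h2, and_self, if_true, if_false]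
      split_ifs <;> omega
    · by_cases h2 : v = b ∧ u = a
      · obtain ⟨rfl, rfl⟩ := h2
        simp only [h1, and_self, if_true, if_false]
        split_ifs <;> omega
      · simp [h1, h2]
  have h1 := two_mul_totMult (H.addEdge a b hab)
  have h2 := two_mul_totMult H
  simp only [key, Finset.sum_add_distrib, ite_and, Finset.sum_ite_eq',
    Finset.sum_const_zero, Finset.sum_ite_irrel, Finset.mem_univ, if_true] at h1
  omega

/-- Removing an edge, phrased through `addEdge` so that its effect on degrees and on `totMult`
follows from the lemmas above. -/
theorem exists_eq_addEdge (H : Multigraph N) (a b : Fin N) (h : 1 ≤ H.m a b) :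
    ∃ (hab : a ≠ b) (K : Multigraph N), H = K.addEdge a b hab := by
  have hab : a ≠ b := by
    rintro rfl
    have := H.loopless a
    omega
  refine ⟨hab, ⟨fun v u => H.m v u -
    ((if v = a ∧ u = b then 1 else 0) + (if v = b ∧ u = a then 1 else 0)), ?_, ?_⟩, ?_⟩
  · intro v u
    rw [H.symm v u, add_comm (if v = a ∧ u = b then 1 else 0)]
    simp only [and_comm]
  · intro v
    simp [H.loopless]
  · apply ext_m
    intro v u
    have hs := H.symm a b
    simp only [addEdge]
    by_cases h1 : v = a ∧ u = b
    · have h2 : ¬ (v = b ∧ u = a) := fun h => hab (h1.1.symm.trans h.1)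
      obtain ⟨rfl, rfl⟩ := h1
      simp only [h2, and_self, if_true, if_false]
      omega
    · by_cases h2 : v = b ∧ u = a
      · obtain ⟨rfl, rfl⟩ := h2
        simp only [h1, and_self, if_true, if_false]
        omega
      · simp [h1, h2]

/-- `H` with a new isolated vertex `0`. -/
def addVertex (H : Multigraph N) : Multigraph (N + 1) where
  m v u := Fin.cases 0 (fun v' => Fin.cases 0 (fun u' => H.m v' u') u) v
  symm v u := by
    cases v using Fin.cases <;> cases u using Fin.cases <;> simp [H.symm]
  loopless v := by
    cases v using Fin.cases <;> simp [H.loopless]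

theorem deg_addVertex_zero (H : Multigraph N) : H.addVertex.deg 0 = 0 := by
  simp [deg, addVertex]

theorem deg_addVertex_succ (H : Multigraph N) (v : Fin N) :
    H.addVertex.deg v.succ = H.deg v := by
  simp [deg, addVertex, Fin.sum_univ_succ]

theorem totMult_addVertex (H : Multigraph N) : H.addVertex.totMult = H.totMult := by
  have h1 := two_mul_totMult H.addVertex
  have h2 := two_mul_totMult H
  have h3 : ∑ v, ∑ u, (H.addVertex.m v u - 1) = ∑ v, ∑ u, (H.m v u - 1) := by
    simp [addVertex, Fin.sum_univ_succ]
  omega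

/-- `H` with the vertex `w` deleted. -/
def delVertex (H : Multigraph (N + 1)) (w : Fin (N + 1)) : Multigraph N where
  m v u := H.m (w.succAbove v) (w.succAbove u)
  symm _ _ := H.symm _ _
  loopless _ := H.loopless _

theorem deg_succAbove (H : Multigraph (N + 1)) (w : Fin (N + 1)) (v : Fin N) :
    H.deg (w.succAbove v) = H.m w (w.succAbove v) + (H.delVertex w).deg v := by
  simp [deg, delVertex, Fin.sum_univ_succAbove _ w, H.symm w]

theorem deg_eq_sum_succAbove (H : Multigraph (N + 1)) (w : Fin (N + 1)) :
    H.deg w = ∑ v, H.m w (w.succAbove v) := by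
  simp [deg, Fin.sum_univ_succAbove _ w, H.loopless]

theorem totMult_delVertex (H : Multigraph (N + 1)) (w : Fin (N + 1)) :
    (H.delVertex w).totMult + ∑ v, (H.m w (w.succAbove v) - 1) = H.totMult := by
  have h1 := two_mul_totMult (H.delVertex w)
  have h2 := two_mul_totMult H
  simp only [Fin.sum_univ_succAbove _ w, H.loopless, Finset.sum_add_distrib,
    H.symm _ w] at h2
  simp only [delVertex] at h1 ⊢
  omega

/-! ### Subdividing edges and suppressing vertices of degree two -/

/-- Subdividing an edge, a multiple one if there is any. -/
theorem exists_subdivide (H : Multigraph N) (hH : ∃ v u, 1 ≤ H.m v u) :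
    ∃ K : Multigraph (N + 1),
      Multiset.map K.deg Finset.univ.val = 2 ::ₘ Multiset.map H.deg Finset.univ.val ∧
      K.totMult ≤ H.totMult - 1 := by
  obtain ⟨a, b, hm, hT⟩ : ∃ a b, 1 ≤ H.m a b ∧ (2 ≤ H.m a b ∨ H.totMult = 0) := by
    by_cases h : ∃ a b, 2 ≤ H.m a b
    · obtain ⟨a, b, h⟩ := h
      exact ⟨a, b, by omega, Or.inl h⟩
    · push Not at h
      obtain ⟨a, b, hab⟩ := hH
      refine ⟨a, b, hab, Or.inr ?_⟩
      refine Finset.sum_eq_zero fun v _ => Finset.sum_eq_zero fun u _ => ?_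
      have := h v u
      omega
  obtain ⟨hab, K, rfl⟩ := H.exists_eq_addEdge a b hm
  have ha : (0 : Fin (N + 1)) ≠ a.succ := (Fin.succ_ne_zero a).symm
  have hb : (0 : Fin (N + 1)) ≠ b.succ := (Fin.succ_ne_zero b).symm
  refine ⟨(K.addVertex.addEdge 0 a.succ ha).addEdge 0 b.succ hb, ?_, ?_⟩
  · have h0 : ((K.addVertex.addEdge 0 a.succ ha).addEdge 0 b.succ hb).deg 0 = 2 := by
      simp [deg_addEdge, deg_addVertex_zero, ha, hb]
    have hs : ∀ v : Fin N, ((K.addVertex.addEdge 0 a.succ ha).addEdge 0 b.succ hb).deg v.succ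
        = (K.addEdge a b hab).deg v := by
      intro v
      simp [deg_addEdge, deg_addVertex_succ]
    rw [Fin.univ_succ]
    simp [h0, hs, Function.comp_def]
  · have h1 : (K.addVertex.addEdge 0 a.succ ha).m 0 b.succ = 0 := by
      simp [addEdge, addVertex, hab.symm, ha]
    have h2 : K.addVertex.m 0 a.succ = 0 := by simp [addVertex]
    rw [totMult_addEdge, totMult_addEdge, h1, h2, totMult_addVertex]
    have h3 := totMult_addEdge K a b hab
    have h4 : (K.addEdge a b hab).m a b = K.m a b + 1 := by
      simp [addEdge, hab]
    rw [h4] at hT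
    rcases hT with hT | hT
    · rw [if_pos (by omega)] at h3
      simp only [h3]
      simp
    · simp
      omega

/-- The neighbours of a vertex of degree `2`: two units distributed over a finite type sit at two, possibly equal, places. -/
theorem exists_of_sum_eq_two (r : Fin N → ℕ) (hr : ∑ v, r v = 2) :
    ∃ a b, ∀ v, r v = (if v = a then 1 else 0) + (if v = b then 1 else 0) := by
  obtain ⟨a, -, ha⟩ : ∃ a ∈ Finset.univ, r a ≠ 0 :=
    Finset.exists_ne_zero_of_sum_ne_zero (by omega)
  have h1 : ∑ v, (r v - if v = a then 1 else 0) = 1 := by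
    have : ∑ v, r v = ∑ v, (r v - if v = a then 1 else 0) + ∑ v, (if v = a then 1 else 0) := by
      rw [← Finset.sum_add_distrib]
      refine Finset.sum_congr rfl fun v _ => ?_
      split_ifs with h
      · subst h; omega
      · omega
    simp only [Finset.sum_ite_eq', Finset.mem_univ, if_true] at this
    omega
  obtain ⟨b, -, hb⟩ : ∃ b ∈ Finset.univ, (r b - if b = a then 1 else 0) ≠ 0 :=
    Finset.exists_ne_zero_of_sum_ne_zero (by omega)
  refine ⟨a, b, fun v => ?_⟩
  have h2 := Finset.add_sum_erase Finset.univ (fun v => r v - if v = a then 1 else 0)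
    (Finset.mem_univ b)
  simp only [h1] at h2
  by_cases hv : v = b
  · subst hv
    split_ifs at * <;> omega
  · have h3 : ∑ v ∈ Finset.univ.erase b, (r v - if v = a then 1 else 0) = 0 := by omega
    have h4 := (Finset.sum_eq_zero_iff.mp h3) v (by simp [hv])
    by_cases hva : v = a
    · subst hva
      simp [hv] at h4 ⊢
      omega
    · simpa [hv, hva] using h4

/-- An edge missing `a` exists when `a` carries less than half of the degree sum.
If every edge met `a`, the degrees of the other vertices would sum to exactly `deg a`. -/
theorem exists_edge_avoiding (H : Multigraph N) (a : Fin N)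
    (h : 2 * H.deg a < ∑ v, H.deg v) :
    ∃ u v, u ≠ a ∧ v ≠ a ∧ 1 ≤ H.m u v := by
  by_contra! hno
  have h1 : ∑ v ∈ Finset.univ.erase a, H.deg v = H.deg a := by
    rw [deg, ← Finset.add_sum_erase _ _ (Finset.mem_univ a), H.loopless, zero_add]
    refine Finset.sum_congr rfl fun v hv => ?_
    have hva : v ≠ a := Finset.ne_of_mem_erase hv
    rw [deg, Finset.sum_eq_single a, H.symm]
    · intro u _ hu
      have := hno v u hva hu
      omega
    · simp
  have h2 := Finset.add_sum_erase Finset.univ H.deg (Finset.mem_univ a)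
  omega

/-- Suppressing the vertex `w` of degree `2`; the other degrees are kept. The bound `hdom` is
used when `w` is joined to one vertex by a double edge. -/
theorem exists_suppress (H : Multigraph (N + 1)) (w : Fin (N + 1)) (hw : H.deg w = 2)
    (hdom : ∀ v, 2 * H.deg (w.succAbove v) ≤ ∑ u, H.deg (w.succAbove u)) :
    ∃ K : Multigraph N, (∀ v, K.deg v = H.deg (w.succAbove v)) ∧
      K.totMult ≤ H.totMult + 1 := by
  have hT := H.totMult_delVertex w
  rw [deg_eq_sum_succAbove] at hw
  obtain ⟨a, b, hr⟩ := exists_of_sum_eq_two (fun v => H.m w (w.succAbove v)) hw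
  have hdeg : ∀ v, H.deg (w.succAbove v) = (H.delVertex w).deg v +
      (if v = a then 1 else 0) + (if v = b then 1 else 0) := by
    intro v
    have := hr v
    rw [deg_succAbove]
    omega
  by_cases hab : a = b
  · subst hab
    have hra : H.m w (w.succAbove a) = 2 := by simpa using hr a
    have hge : 1 ≤ ∑ v, (H.m w (w.succAbove v) - 1) := by
      refine le_trans ?_ (Finset.single_le_sum (f := fun v => H.m w (w.succAbove v) - 1)
        (fun _ _ => Nat.zero_le _) (Finset.mem_univ a))
      simp [hra]
    have hd := hdom a
    simp only [hdeg, Finset.sum_add_distrib, Finset.sum_ite_eq', Finset.mem_univ, if_true] at hd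
    obtain ⟨u, v, hu, hv, huv⟩ := (H.delVertex w).exists_edge_avoiding a (by omega)
    obtain ⟨hne, K, hK⟩ := (H.delVertex w).exists_eq_addEdge u v huv
    refine ⟨(K.addEdge a u hu.symm).addEdge a v hv.symm, ?_, ?_⟩
    · intro x
      rw [hdeg, hK]
      simp only [deg_addEdge]
      omega
    · rw [hK, totMult_addEdge] at hT
      rw [totMult_addEdge, totMult_addEdge]
      split_ifs at * <;> omega
  · refine ⟨(H.delVertex w).addEdge a b hab, ?_, ?_⟩
    · intro v
      rw [hdeg, deg_addEdge]
    · rw [totMult_addEdge]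
      split_ifs <;> omega

end Multigraph

/-! ### Degree multisets -/

/-- The multiset `s` is the degree multiset of a multigraph with total multiplicity at most `k`. -/
def TotRealizable (s : Multiset ℕ) (k : ℕ) : Prop :=
  ∃ (N : ℕ) (H : Multigraph N), Multiset.map H.deg Finset.univ.val = s ∧ H.totMult ≤ k

/-- Subdivision; at `k = 0` the truncated `k - 1` says that a simple graph stays simple. -/
theorem TotRealizable.cons_two {s : Multiset ℕ} {k : ℕ} (h : TotRealizable s k)
    (hs : ∃ x ∈ s, 0 < x) : TotRealizable (2 ::ₘ s) (k - 1) := by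
  obtain ⟨N, H, rfl, hT⟩ := h
  obtain ⟨x, hx, hx0⟩ := hs
  obtain ⟨v, -, rfl⟩ := Multiset.mem_map.mp hx
  obtain ⟨u, -, hu⟩ := Finset.exists_ne_zero_of_sum_ne_zero
    (show ∑ u, H.m v u ≠ 0 from hx0.ne')
  obtain ⟨K, hK, hKT⟩ := H.exists_subdivide ⟨v, u, Nat.one_le_iff_ne_zero.mpr hu⟩
  exact ⟨N + 1, K, hK, by omega⟩

theorem TotRealizable.of_cons_two {s : Multiset ℕ} {k : ℕ} (h : TotRealizable (2 ::ₘ s) k)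
    (hs : ∀ x ∈ s, 2 * x ≤ s.sum) : TotRealizable s (k + 1) := by
  obtain ⟨N, H, hH, hT⟩ := h
  obtain ⟨w, -, hw⟩ := Multiset.mem_map.mp
    (show 2 ∈ Multiset.map H.deg Finset.univ.val by rw [hH]; simp)
  obtain _ | N := N
  · exact w.elim0
  have hs' : s = Multiset.map (fun v => H.deg (w.succAbove v)) Finset.univ.val := by
    rw [Fin.univ_succAbove N w] at hH
    simp only [Finset.cons_val, Multiset.map_cons, hw, Finset.map_val, Multiset.map_map] at hH
    exact ((Multiset.cons_inj_right 2).mp hH).symm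
  obtain ⟨K, hK, hKT⟩ := H.exists_suppress w hw (fun v => by
    have := hs (H.deg (w.succAbove v)) (by rw [hs']; exact Multiset.mem_map_of_mem _ (by simp))
    rw [hs'] at this
    exact this)
  refine ⟨N, K, ?_, by omega⟩
  rw [hs']
  exact Multiset.map_congr rfl fun v _ => hK v

theorem TotRealizable.add_twos {s : Multiset ℕ} (hs : ∃ x ∈ s, 0 < x) (t k : ℕ)
    (h : TotRealizable s k) : TotRealizable (Multiset.replicate t 2 + s) (k - t) := by
  induction t with
  | zero => simpa using h
  | succ t ih =>
    obtain ⟨x, hx, hx0⟩ := hs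
    have := ih.cons_two ⟨x, by simp [hx], hx0⟩
    rw [Multiset.replicate_succ, Multiset.cons_add]
    rwa [Nat.sub_sub] at this

theorem TotRealizable.of_add_twos {s : Multiset ℕ} (hs : ∀ x ∈ s, 2 * x ≤ s.sum)
    (hs2 : 2 ≤ s.sum) (t k : ℕ) (h : TotRealizable (Multiset.replicate t 2 + s) k) :
    TotRealizable s (k + t) := by
  induction t generalizing k with
  | zero => simpa using h
  | succ t ih =>
    rw [Multiset.replicate_succ, Multiset.cons_add] at h
    have := ih (k + 1) (h.of_cons_two fun x hx => by
      rw [Multiset.sum_add, Multiset.sum_replicate, smul_eq_mul]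
      rcases Multiset.mem_add.mp hx with hx | hx
      · have hx2 := Multiset.eq_of_mem_replicate hx
        -- A copy of `2` is present, so `t ≥ 1` and the sum is at least `2 + 2`.
        have ht : t ≠ 0 := by
          rintro rfl
          simp at hx
        omega
      · have := hs x hx
        omega)
    rwa [add_right_comm, add_assoc] at this

theorem Multigraph.simple_iff_totMult {N : ℕ} (H : Multigraph N) :
    H.Simple ↔ H.totMult ≤ 0 := by
  have h := H.two_mul_totMult
  constructor
  · intro hs
    have : ∑ v, ∑ u, (H.m v u - 1) = 0 :=
      Finset.sum_eq_zero fun v _ => Finset.sum_eq_zero fun u _ => by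
        have := hs v u
        omega
    omega
  · intro h0 v u
    have h1 : ∑ v, ∑ u, (H.m v u - 1) = 0 := by omega
    have h2 := Finset.sum_eq_zero_iff.mp (Finset.sum_eq_zero_iff.mp h1 v (by simp)) u (by simp)
    omega

theorem map_append_twos (n t : ℕ) (d : ℕ → ℕ) :
    Multiset.map (fun i => if i ≤ n then d i else 2) (Finset.Icc 1 (n + t)).val =
      Multiset.replicate t 2 + Multiset.map d (Finset.Icc 1 n).val := by
  induction t with
  | zero =>
    simp only [add_zero, Multiset.replicate_zero, zero_add]
    refine Multiset.map_congr rfl fun i hi => ?_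
    rw [if_pos (Finset.mem_Icc.mp hi).2]
  | succ t ih =>
    rw [← add_assoc, ← Finset.insert_Icc_right_eq_Icc_add_one (by omega),
      Finset.insert_val_of_notMem (by simp), Multiset.map_cons, ih, Multiset.replicate_succ,
      Multiset.cons_add, if_neg (by omega)]

/-- Owens–Trent. Let `d 1, …, d n` be a degree sequence
(nonincreasing, positive entries, even sum) with `d 1 ≤ d 2 + ⋯ + d n`, and let
`t` be a positive integer. Then `d` is `t`-tot-graphic iff the sequence
`d ∘ 2^t`, obtained by appending `t` copies of `2` to `d`, is graphic. -/
theorem stmt0 (n t : ℕ) (hn : 0 < n) (ht : 0 < t) (d : ℕ → ℕ)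
    (hpos : ∀ i ∈ Finset.Icc 1 n, 0 < d i)
    (hmono : AntitoneOn d (Set.Icc 1 n))
    (heven : Even (∑ i ∈ Finset.Icc 1 n, d i))
    (hdom : d 1 ≤ ∑ i ∈ Finset.Icc 2 n, d i) :
    TotGraphic t n d ↔ Graphic (n + t) (fun i => if i ≤ n then d i else 2) := by
  have hG : Graphic (n + t) (fun i => if i ≤ n then d i else 2) ↔
      TotRealizable (Multiset.replicate t 2 + Multiset.map d (Finset.Icc 1 n).val) 0 := by
    rw [← map_append_twos]
    simp only [Graphic, Multigraph.simple_iff_totMult]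
    rfl
  rw [hG]
  have h1 : (1 : ℕ) ∈ Finset.Icc 1 n := by simp; omega
  have hsum : (Multiset.map d (Finset.Icc 1 n).val).sum = d 1 + ∑ i ∈ Finset.Icc 2 n, d i := by
    change ∑ i ∈ Finset.Icc 1 n, d i = _
    rw [← Finset.insert_Icc_add_one_left_eq_Icc hn, Finset.sum_insert (by simp), one_add_one_eq_two]
  have hd1 := hpos 1 h1
  constructor
  · intro h
    have := TotRealizable.add_twos ⟨d 1, Multiset.mem_map_of_mem d h1, hd1⟩ t t h
    rwa [Nat.sub_self] at this
  · intro h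
    have := TotRealizable.of_add_twos (s := Multiset.map d (Finset.Icc 1 n).val)
      (fun x hx => by
        obtain ⟨i, hi, rfl⟩ := Multiset.mem_map.mp hx
        have hi' : 1 ≤ i ∧ i ≤ n := Finset.mem_Icc.mp (Finset.mem_val.mp hi)
        have := hmono (show 1 ∈ Set.Icc 1 n from ⟨le_rfl, hn⟩) (show i ∈ Set.Icc 1 n from hi')
          hi'.1
        rw [hsum]
        omega) (by rw [hsum]; omega) t 0 h
    rwa [zero_add] at this
end

section
/- Let d = (d_1,…,d_n) be a degree sequence (a nonincreasing finite sequence of positive integers with even sum) satisfying d_1 ≤ ∑_{i=2}^n d_i, let t be a positive integer, and let m(d) = max{ i : d_i > i } (with m(d) = 0 if d_1 = 1). Then d is t-tot-graphic if and only if for every ℓ = 1,…,m(d): ∑_{i=1}^ℓ d_i ≤ ℓ(ℓ−1) + ∑_{i=ℓ+1}^n min{ℓ, d_i} + t·min{ℓ, 2}. -/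
/-! ### Simple graphs as 0/1 matrices -/

/-- The adjacency matrices of simple graphs on the vertex set `ℕ`. With integer entries, edge
exchanges become additions and subtractions and degrees are linear; only the entries below some
bound `n` ever matter. -/
def IsAdj (a : ℕ → ℕ → ℤ) : Prop :=
  (∀ v u, a v u = a u v) ∧ (∀ v, a v v = 0) ∧ ∀ v u, a v u = 0 ∨ a v u = 1

/-- The matrix of the single edge `xy`, for `x ≠ y`. -/
def edgeMat (x y v u : ℕ) : ℤ := if (v = x ∧ u = y) ∨ (v = y ∧ u = x) then 1 else 0

theorem edgeMat_symm (x y v u : ℕ) : edgeMat x y v u = edgeMat x y u v := by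
  unfold edgeMat; congr 1; grind

theorem edgeMat_self {x y : ℕ} (h : x ≠ y) (v : ℕ) : edgeMat x y v v = 0 := by
  unfold edgeMat; grind

theorem edgeMat_deg {n x y : ℕ} (hxy : x ≠ y) (hx : x < n) (hy : y < n) (v : ℕ) :
    ∑ u ∈ Finset.range n, edgeMat x y v u =
      (if v = x then 1 else 0) + (if v = y then 1 else 0) := by
  have h : ∀ u, edgeMat x y v u = (if u = y then (if v = x then 1 else 0) else 0)
      + (if u = x then (if v = y then 1 else 0) else 0) := by
    intro u; unfold edgeMat; grind
  simp only [h, Finset.sum_add_distrib, Finset.sum_ite_eq', Finset.mem_range, hx, hy, if_true]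

theorem IsAdj.add {a : ℕ → ℕ → ℤ} (ha : IsAdj a) {x y : ℕ} (hxy : x ≠ y) (h : a x y = 0) :
    IsAdj (fun v u => a v u + edgeMat x y v u) := by
  obtain ⟨h1, h2, h3⟩ := ha
  refine ⟨fun v u => ?_, fun v => ?_, fun v u => ?_⟩ <;> simp only
  · rw [h1, edgeMat_symm]
  · rw [h2, edgeMat_self hxy, add_zero]
  · unfold edgeMat; have := h1 x y; have := h3 v u; grind

theorem IsAdj.sub {a : ℕ → ℕ → ℤ} (ha : IsAdj a) {x y : ℕ} (h : a x y = 1) :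
    IsAdj (fun v u => a v u - edgeMat x y v u) := by
  obtain ⟨h1, h2, h3⟩ := ha
  have hxy : x ≠ y := by rintro rfl; simp [h2] at h
  refine ⟨fun v u => ?_, fun v => ?_, fun v u => ?_⟩ <;> simp only
  · rw [h1, edgeMat_symm]
  · rw [h2, edgeMat_self hxy, sub_zero]
  · unfold edgeMat; have := h1 x y; have := h3 v u; grind

/-- The degree of `v` among the vertices `0, …, n - 1`. -/
def vdeg (n : ℕ) (a : ℕ → ℕ → ℤ) (v : ℕ) : ℤ := ∑ u ∈ Finset.range n, a v u

theorem vdeg_add {n : ℕ} (a : ℕ → ℕ → ℤ) {x y : ℕ} (hxy : x ≠ y) (hx : x < n) (hy : y < n)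
    (v : ℕ) : vdeg n (fun v u => a v u + edgeMat x y v u) v =
      vdeg n a v + ((if v = x then 1 else 0) + (if v = y then 1 else 0)) := by
  simp only [vdeg, Finset.sum_add_distrib, edgeMat_deg hxy hx hy]

theorem vdeg_sub {n : ℕ} (a : ℕ → ℕ → ℤ) {x y : ℕ} (hxy : x ≠ y) (hx : x < n) (hy : y < n)
    (v : ℕ) : vdeg n (fun v u => a v u - edgeMat x y v u) v =
      vdeg n a v - ((if v = x then 1 else 0) + (if v = y then 1 else 0)) := by
  simp only [vdeg, Finset.sum_sub_distrib, edgeMat_deg hxy hx hy]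

/-- The handshake lemma. -/
theorem even_sum_vdeg {a : ℕ → ℕ → ℤ} (h1 : ∀ v u, a v u = a u v) (h2 : ∀ v, a v v = 0)
    (n : ℕ) : Even (∑ v ∈ Finset.range n, vdeg n a v) := by
  unfold vdeg
  induction n with
  | zero => simp
  | succ n ih =>
    simp only [Finset.sum_range_succ, Finset.sum_add_distrib, h2]
    simp only [fun v => h1 v n]
    have : ∀ A B : ℤ, A + B + (B + 0) = A + (B + B) := by intros; ring
    rw [this]
    exact ih.add (Even.add_self _)

/-- A vertex of larger degree has a neighbour, other than `r`, that `r` lacks. -/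
theorem exists_private_neighbour {n : ℕ} {a : ℕ → ℕ → ℤ} (ha : IsAdj a) {i r : ℕ} (hi : i < n)
    (hr : r < n) (h : vdeg n a r < vdeg n a i) :
    ∃ u < n, u ≠ r ∧ u ≠ i ∧ a i u = 1 ∧ a r u = 0 := by
  obtain ⟨h1, h2, h3⟩ := ha
  have hir : i ≠ r := by rintro rfl; exact lt_irrefl _ h
  by_contra hcon
  push Not at hcon
  have key : 0 ≤ ∑ u ∈ Finset.range n,
      (a r u - a i u + (if u = r then a i r else 0) - (if u = i then a i r else 0)) := by
    refine Finset.sum_nonneg fun u hu => ?_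
    have := hcon u (Finset.mem_range.1 hu)
    have := h3 r u
    have := h3 i u
    have := h1 i r
    have := h2 i
    have := h2 r
    grind
  simp only [Finset.sum_add_distrib, Finset.sum_sub_distrib, Finset.sum_ite_eq',
    Finset.mem_range, hi, hr, if_true] at key
  unfold vdeg at h
  linarith

/-! ### The Erdős–Gallai theorem -/

/-- The simple graph `a` on `0, …, n - 1` is a subrealization of `d` with critical index `r`: no
degree exceeds its target, the vertices before `r` are saturated, and those after `r` are
independent. -/
structure SubReal (n : ℕ) (d : ℕ → ℤ) (r : ℕ) (a : ℕ → ℕ → ℤ) : Prop where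
  adj : IsAdj a
  le : ∀ v < n, vdeg n a v ≤ d v
  full : ∀ v < r, vdeg n a v = d v
  indep : ∀ v u, r < v → v < n → r < u → u < n → a v u = 0

set_option maxHeartbeats 2000000 in
/-- If the critical vertex `r` is deficient, an edge exchange raises its degree; vertices before `r`
stay saturated and those after `r` stay independent. -/
theorem SubReal.step {n : ℕ} {d : ℕ → ℤ} (hd : Antitone d)
    (heven : Even (∑ i ∈ Finset.range n, d i)) {r : ℕ} (hr : r < n)
    (hEG : ∑ i ∈ Finset.range (r + 1), d i ≤
      (r + 1) * r + ∑ i ∈ Finset.Ico (r + 1) n, min ((r : ℤ) + 1) (d i))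
    {a : ℕ → ℕ → ℤ} (ha : SubReal n d r a) (hdef : vdeg n a r < d r) :
    ∃ a', SubReal n d r a' ∧ vdeg n a r < vdeg n a' r := by
  have hadj := ha.adj
  obtain ⟨h1, h2, h3⟩ := ha.adj
  have hle := ha.le
  have hfull := ha.full
  have hindep := ha.indep
  have priv : ∀ i < r, ∃ u < n, u ≠ r ∧ u ≠ i ∧ a i u = 1 ∧ a r u = 0 := fun i hi =>
    exists_private_neighbour hadj (hi.trans hr) hr
      (by rw [hfull i hi]; exact hdef.trans_le (hd hi.le))
  -- an unsaturated later vertex not adjacent to `r`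
  by_cases c0 : ∃ k, r < k ∧ k < n ∧ vdeg n a k < d k ∧ a r k = 0
  · obtain ⟨k, hk, hkn, hkd, hrk⟩ := c0
    have hne : r ≠ k := hk.ne
    refine ⟨fun v u => a v u + edgeMat r k v u, ⟨hadj.add hne hrk, ?_, ?_, ?_⟩, ?_⟩
    · intro v hv; rw [vdeg_add a hne hr hkn]; have := hle v hv; grind
    · intro v hv; rw [vdeg_add a hne hr hkn]; have := hfull v hv; grind
    · intro v u hv hvn hu hun; have := hindep v u hv hvn hu hun; unfold edgeMat; grind
    · rw [vdeg_add a hne hr hkn]; grind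
  have c0' : ∀ k, r < k → k < n → vdeg n a k < d k → a r k = 1 := by
    intro k hk hkn hkd
    have := h3 r k
    grind
  by_cases c1 : ∃ i < r, a r i = 0
  · obtain ⟨i, hi, hri⟩ := c1
    have hin := hi.trans hr
    obtain ⟨u, hun, hur, hui, hiu, hru⟩ := priv i hi
    have hri' : i ≠ r := hi.ne
    have hui1 : a u i = 1 := by rw [h1]; exact hiu
    have hur0 : a u r = 0 := by rw [h1]; exact hru
    have hir0 : a i r = 0 := by rw [h1]; exact hri
    by_cases c2 : vdeg n a r + 2 ≤ d r
    · -- replace the edge `ui` by `ur` and `ir`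
      have b1 := hadj.sub hui1
      have b2 := b1.add hur (by simp only [hur0]; unfold edgeMat; grind)
      have b3 := b2.add hri' (by simp only [hir0]; unfold edgeMat; grind)
      refine ⟨_, ⟨b3, ?_, ?_, ?_⟩, ?_⟩
      · intro v hv
        rw [vdeg_add _ hri' hin hr, vdeg_add _ hur hun hr, vdeg_sub _ hui hun hin]
        have := hle v hv; grind
      · intro v hv
        rw [vdeg_add _ hri' hin hr, vdeg_add _ hur hun hr, vdeg_sub _ hui hun hin]
        have := hfull v hv; grind
      · intro v u' hv hvn hu hun; have := hindep v u' hv hvn hu hun; unfold edgeMat; grind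
      · rw [vdeg_add _ hri' hin hr, vdeg_add _ hur hun hr, vdeg_sub _ hui hun hin]; grind
    · -- the deficiency at `r` is one, so by parity some later vertex is deficient
      obtain ⟨k, hk, hkn, hkd⟩ : ∃ k, r < k ∧ k < n ∧ vdeg n a k < d k := by
        by_contra hcon
        push Not at hcon
        have hs : ∑ v ∈ Finset.range n, d v
            = ∑ v ∈ Finset.range n, vdeg n a v + 1 := by
          have : ∀ v ∈ Finset.range n, d v = vdeg n a v + if v = r then 1 else 0 := by
            intro v hv
            have hvn := Finset.mem_range.1 hv
            have h4 := hle v hvn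
            rcases lt_trichotomy v r with h | h | h
            · rw [hfull v h, if_neg h.ne, add_zero]
            · subst h; rw [if_pos rfl]; omega
            · rw [if_neg h.ne']; have := hcon v h hvn; omega
          rw [Finset.sum_congr rfl this, Finset.sum_add_distrib, Finset.sum_ite_eq',
            if_pos (Finset.mem_range.2 hr)]
        have he := even_sum_vdeg h1 h2 n
        rw [hs] at heven
        exact (Int.not_even_iff_odd.2 he.add_one) heven
      have hrk := c0' k hk hkn hkd
      have hne : r ≠ k := hk.ne
      have huk : u ≠ k := by rintro rfl; omega
      -- replace the edges `ui` and `rk` by `ur` and `ir`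
      have b1 := hadj.sub hui1
      have b2 := b1.sub (x := r) (y := k) (by simp only [hrk]; unfold edgeMat; grind)
      have b3 := b2.add hur (by simp only [hur0]; unfold edgeMat; grind)
      have b4 := b3.add hri' (by simp only [hir0]; unfold edgeMat; grind)
      refine ⟨_, ⟨b4, ?_, ?_, ?_⟩, ?_⟩
      · intro v hv
        rw [vdeg_add _ hri' hin hr, vdeg_add _ hur hun hr, vdeg_sub _ hne hr hkn,
          vdeg_sub _ hui hun hin]
        have := hle v hv; grind
      · intro v hv
        rw [vdeg_add _ hri' hin hr, vdeg_add _ hur hun hr, vdeg_sub _ hne hr hkn,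
          vdeg_sub _ hui hun hin]
        have := hfull v hv; grind
      · intro v u' hv hvn hu hun; have := hindep v u' hv hvn hu hun; unfold edgeMat; grind
      · rw [vdeg_add _ hri' hin hr, vdeg_add _ hur hun hr, vdeg_sub _ hne hr hkn,
          vdeg_sub _ hui hun hin]
        grind
  have c1' : ∀ i < r, a r i = 1 := by
    intro i hi
    have := h3 r i
    grind
  have hdegk : ∀ k, r < k → k < n →
      vdeg n a k = ∑ i ∈ Finset.range (r + 1), a k i := by
    intro k hk hkn
    unfold vdeg
    rw [← Finset.sum_range_add_sum_Ico _ (Nat.succ_le_of_lt hr)]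
    rw [add_eq_left]
    refine Finset.sum_eq_zero fun u hu => ?_
    rw [Finset.mem_Ico] at hu
    exact hindep k u hk hkn (by omega) hu.2
  by_cases c2 : ∃ k, r < k ∧ k < n ∧ vdeg n a k < min ((r : ℤ) + 1) (d k)
  · obtain ⟨k, hk, hkn, hkd⟩ := c2
    rw [lt_min_iff] at hkd
    have hrk := c0' k hk hkn hkd.2
    obtain ⟨i, hi, hki⟩ : ∃ i < r, a k i = 0 := by
      by_contra hcon
      push Not at hcon
      have : ∑ i ∈ Finset.range (r + 1), a k i = r + 1 := by
        rw [Finset.sum_range_succ, h1 k r, hrk,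
          Finset.sum_congr rfl (g := fun _ => (1 : ℤ))
            (fun i hi => (h3 k i).resolve_left (hcon i (Finset.mem_range.1 hi)))]
        simp
      rw [hdegk k hk hkn] at hkd
      omega
    obtain ⟨u, hun, hur, hui, hiu, hru⟩ := priv i hi
    have hin := hi.trans hr
    have hui1 : a u i = 1 := by rw [h1]; exact hiu
    have hur0 : a u r = 0 := by rw [h1]; exact hru
    have hu_lt : r < u := by
      by_contra hcon
      have := c1' u (by omega)
      omega
    have huk : u ≠ k := by rintro rfl; omega
    have hkne : k ≠ i := by omega
    -- replace `ui` by `ur` and `ki`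
    have b1 := hadj.sub hui1
    have b2 := b1.add hur (by simp only [hur0]; unfold edgeMat; grind)
    have b3 := b2.add hkne (by simp only [hki]; unfold edgeMat; grind)
    refine ⟨_, ⟨b3, ?_, ?_, ?_⟩, ?_⟩
    · intro v hv
      rw [vdeg_add _ hkne hkn hin, vdeg_add _ hur hun hr, vdeg_sub _ hui hun hin]
      have := hle v hv; grind
    · intro v hv
      rw [vdeg_add _ hkne hkn hin, vdeg_add _ hur hun hr, vdeg_sub _ hui hun hin]
      have := hfull v hv; grind
    · intro v u' hv hvn hu hun; have := hindep v u' hv hvn hu hun; unfold edgeMat; grind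
    · rw [vdeg_add _ hkne hkn hin, vdeg_add _ hur hun hr, vdeg_sub _ hui hun hin]; grind
  by_cases c3 : ∃ i j, i < j ∧ j < r ∧ a i j = 0
  · obtain ⟨i, j, hij, hj, haij⟩ := c3
    obtain ⟨u, hun, hur, hui, hiu, hru⟩ := priv i (hij.trans hj)
    obtain ⟨w, hwn, hwr, hwj, hjw, hrw⟩ := priv j hj
    have hjn := hj.trans hr
    have hin := hij.trans hjn
    have hui1 : a u i = 1 := by rw [h1]; exact hiu
    have hur0 : a u r = 0 := by rw [h1]; exact hru
    have hwj1 : a w j = 1 := by rw [h1]; exact hjw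
    have hu_lt : r < u := by
      by_contra hcon
      have := c1' u (by omega)
      omega
    have hw_lt : r < w := by
      by_contra hcon
      have := c1' w (by omega)
      omega
    -- replace `ui` and `wj` by `ij` and `ur`
    have b1 := hadj.sub hui1
    have b2 := b1.sub (x := w) (y := j) (by simp only [hwj1]; unfold edgeMat; grind)
    have b3 := b2.add hij.ne (by simp only [haij]; unfold edgeMat; grind)
    have b4 := b3.add hur (by simp only [hur0]; unfold edgeMat; grind)
    refine ⟨_, ⟨b4, ?_, ?_, ?_⟩, ?_⟩
    · intro v hv
      rw [vdeg_add _ hur hun hr, vdeg_add _ hij.ne hin hjn, vdeg_sub _ hwj hwn hjn,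
        vdeg_sub _ hui hun hin]
      have := hle v hv; grind
    · intro v hv
      rw [vdeg_add _ hur hun hr, vdeg_add _ hij.ne hin hjn, vdeg_sub _ hwj hwn hjn,
        vdeg_sub _ hui hun hin]
      have := hfull v hv; grind
    · intro v u' hv hvn hu hun; have := hindep v u' hv hvn hu hun; unfold edgeMat; grind
    · rw [vdeg_add _ hur hun hr, vdeg_add _ hij.ne hin hjn, vdeg_sub _ hwj hwn hjn,
        vdeg_sub _ hui hun hin]
      grind
  -- now `{0, …, r}` is a clique and every later vertex has degree at least `min (r + 1) (d k)`,
  -- so the Erdős–Gallai inequality forces `r` to be saturated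
  exfalso
  push Not at c2 c3
  have hclique : ∀ v ≤ r, ∀ u ≤ r, a v u = if v = u then 0 else 1 := by
    intro v hv u hu
    have key : ∀ i j, i < j → j ≤ r → a i j = 1 := by
      intro i j hij hj
      rcases hj.lt_or_eq with hj | rfl
      · exact (h3 i j).resolve_left (c3 i j hij hj)
      · rw [h1]; exact c1' i hij
    rcases lt_trichotomy v u with h | h | h
    · rw [if_neg h.ne]; exact key v u h hu
    · subst h; rw [if_pos rfl]; exact h2 v
    · rw [if_neg h.ne', h1]; exact key u v h hv
  have hlhs : ∑ v ∈ Finset.range (r + 1), vdeg n a v < ∑ v ∈ Finset.range (r + 1), d v :=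
    Finset.sum_lt_sum (fun v hv => hle v (by have := Finset.mem_range.1 hv; omega))
      ⟨r, by simp, hdef⟩
  have hsplit : ∑ v ∈ Finset.range (r + 1), vdeg n a v =
      (∑ v ∈ Finset.range (r + 1), ∑ u ∈ Finset.range (r + 1), a v u) +
        ∑ u ∈ Finset.Ico (r + 1) n, ∑ v ∈ Finset.range (r + 1), a u v := by
    rw [Finset.sum_comm (s := Finset.Ico (r + 1) n), ← Finset.sum_add_distrib]
    refine Finset.sum_congr rfl fun v _ => ?_
    unfold vdeg
    rw [← Finset.sum_range_add_sum_Ico _ (Nat.succ_le_of_lt hr)]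
    simp only [h1 v]
  have hA : ∑ v ∈ Finset.range (r + 1), ∑ u ∈ Finset.range (r + 1), a v u
      = ((r : ℤ) + 1) * r := by
    have : ∀ v ∈ Finset.range (r + 1), ∑ u ∈ Finset.range (r + 1), a v u = (r : ℤ) := by
      intro v hv
      have hv' := Finset.mem_range.1 hv
      have : ∀ u ∈ Finset.range (r + 1), a v u = 1 - if u = v then 1 else 0 := by
        intro u hu
        have hu' := Finset.mem_range.1 hu
        rw [hclique v (by omega) u (by omega)]
        grind
      rw [Finset.sum_congr rfl this, Finset.sum_sub_distrib, Finset.sum_ite_eq', if_pos hv]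
      simp
    rw [Finset.sum_congr rfl this]
    simp
  have hB : ∑ i ∈ Finset.Ico (r + 1) n, min ((r : ℤ) + 1) (d i) ≤
      ∑ u ∈ Finset.Ico (r + 1) n, ∑ v ∈ Finset.range (r + 1), a u v := by
    refine Finset.sum_le_sum fun k hk => ?_
    rw [Finset.mem_Ico] at hk
    rw [← hdegk k (by omega) hk.2]
    exact c2 k (by omega) hk.2
  linarith

/-- Sufficiency in the **Erdős–Gallai theorem**. -/
theorem erdosGallai {n : ℕ} {d : ℕ → ℤ} (hd : Antitone d) (hnn : ∀ i, 0 ≤ d i)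
    (heven : Even (∑ i ∈ Finset.range n, d i))
    (hEG : ∀ r < n, ∑ i ∈ Finset.range (r + 1), d i ≤
      (r + 1) * r + ∑ i ∈ Finset.Ico (r + 1) n, min ((r : ℤ) + 1) (d i)) :
    ∃ a, IsAdj a ∧ ∀ v < n, vdeg n a v = d v := by
  have main : ∀ r ≤ n, ∃ a, SubReal n d r a := by
    intro r
    induction r with
    | zero =>
      refine fun _ => ⟨fun _ _ => 0, ⟨by simp, by simp, by simp⟩, ?_, by simp, by simp⟩
      intro v _
      simpa [vdeg] using hnn v
    | succ r ih =>
      intro hr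
      obtain ⟨a, ha⟩ := ih (by omega)
      have inner : ∀ (m : ℕ) (a : ℕ → ℕ → ℤ), SubReal n d r a → d r - vdeg n a r ≤ m →
          ∃ a, SubReal n d r a ∧ vdeg n a r = d r := by
        intro m
        induction m with
        | zero =>
          intro a ha hm
          have := ha.le r (by omega)
          exact ⟨a, ha, by push_cast at hm; omega⟩
        | succ m ihm =>
          intro a ha hm
          by_cases hf : vdeg n a r = d r
          · exact ⟨a, ha, hf⟩
          · have h4 := ha.le r (by omega)
            obtain ⟨a', ha', hlt⟩ := ha.step hd heven (by omega) (hEG r (by omega))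
              (lt_of_le_of_ne h4 hf)
            exact ihm a' ha' (by push_cast at hm; omega)
      obtain ⟨a, ha, hf⟩ := inner (d r - vdeg n a r).toNat a ha (by omega)
      refine ⟨a, ha.adj, ha.le, ?_, ?_⟩
      · intro v hv
        rcases (Nat.lt_succ_iff.1 hv).lt_or_eq with h | rfl
        · exact ha.full v h
        · exact hf
      · intro v u hv hvn hu hun
        exact ha.indep v u (by omega) hvn (by omega) hun
  obtain ⟨a, ha⟩ := main n le_rfl
  exact ⟨a, ha.adj, ha.full⟩
/-! ### The slack of the Erdős–Gallai inequalities -/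

/-- The slack (right side minus left side) of the Erdős–Gallai inequality at `ℓ`, for the sequence
`d 0, …, d (n - 1)`. -/
def slack (n : ℕ) (d : ℕ → ℤ) (ℓ : ℕ) : ℤ :=
  ℓ * (ℓ - 1) + ∑ i ∈ Finset.Ico ℓ n, min (ℓ : ℤ) (d i) - ∑ i ∈ Finset.range ℓ, d i

/-- The increase of `∑_{i > ℓ} min ℓ (d i)` when the cap `ℓ` is raised by one, that is, the number
of entries after position `ℓ` that exceed `ℓ`. -/
def slackTail (n : ℕ) (d : ℕ → ℤ) (ℓ : ℕ) : ℤ :=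
  ∑ i ∈ Finset.Ico (ℓ + 1) n, (min ((ℓ : ℤ) + 1) (d i) - min (ℓ : ℤ) (d i))

theorem slackTail_nonneg (n : ℕ) (d : ℕ → ℤ) (ℓ : ℕ) : 0 ≤ slackTail n d ℓ :=
  Finset.sum_nonneg fun i _ => by omega

theorem slack_zero (n : ℕ) {d : ℕ → ℤ} (hnn : ∀ i, 0 ≤ d i) : slack n d 0 = 0 := by
  unfold slack
  have : ∀ i, min (0 : ℤ) (d i) = 0 := fun i => min_eq_left (hnn i)
  simp [this]

theorem slack_succ {n : ℕ} (d : ℕ → ℤ) {ℓ : ℕ} (h : ℓ < n) :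
    slack n d (ℓ + 1) = slack n d ℓ + (2 * ℓ + slackTail n d ℓ - min (ℓ : ℤ) (d ℓ) - d ℓ) := by
  unfold slack slackTail
  rw [Finset.sum_range_succ, ← Finset.add_sum_Ioo_eq_sum_Ico h, Finset.sum_sub_distrib]
  have : Finset.Ioo ℓ n = Finset.Ico (ℓ + 1) n := by ext; simp
  rw [this]
  push_cast
  ring

/-- The term at `ℓ + 1` leaves the sum, and every other term is concave in the cap. -/
theorem slackTail_succ_le {n : ℕ} {d : ℕ → ℤ} {ℓ : ℕ} (h : ℓ + 1 < n) (hd : (ℓ : ℤ) + 1 ≤ d (ℓ + 1)) :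
    slackTail n d (ℓ + 1) + 1 ≤ slackTail n d ℓ := by
  unfold slackTail
  rw [← Finset.add_sum_Ioo_eq_sum_Ico h]
  have : Finset.Ioo (ℓ + 1) n = Finset.Ico (ℓ + 1 + 1) n := by ext; simp
  rw [this, add_comm]
  refine add_le_add (by omega) (Finset.sum_le_sum fun i _ => ?_)
  push_cast
  omega

/-- If no entry from position `ℓ` on exceeds `ℓ`, the slack at `ℓ` has the parity of the sum. -/
theorem even_slack {n : ℕ} {d : ℕ → ℤ} (heven : Even (∑ i ∈ Finset.range n, d i)) {ℓ : ℕ}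
    (hℓ : ℓ ≤ n) (h : ∀ i, ℓ ≤ i → d i ≤ ℓ) : Even (slack n d ℓ) := by
  unfold slack
  rw [Finset.sum_congr rfl (g := d)
    (fun i hi => min_eq_right (h i (Finset.mem_Ico.1 hi).1))]
  rw [← Finset.sum_range_add_sum_Ico _ hℓ] at heven
  have h1 : Even ((ℓ : ℤ) * (ℓ - 1)) := Int.even_mul_pred_self _
  have : ∀ p A B : ℤ, p + B - A = p + (A + B) - (A + A) := by intros; ring
  rw [this]
  exact (h1.add heven).sub (Even.add_self _)

/-- The inequalities at the indices `ℓ` with `d (ℓ - 1) > ℓ` imply all of them. -/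
theorem slack_all {n : ℕ} {d : ℕ → ℤ} (hd : Antitone d) (hnn : ∀ i, 0 ≤ d i)
    (heven : Even (∑ i ∈ Finset.range n, d i)) (t : ℕ)
    (h : ∀ ℓ, 1 ≤ ℓ → ℓ ≤ n → (ℓ : ℤ) < d (ℓ - 1) → 0 ≤ slack n d ℓ + t * min (ℓ : ℤ) 2) :
    ∀ ℓ ≤ n, 0 ≤ slack n d ℓ + t * min (ℓ : ℤ) 2 := by
  intro ℓ
  induction ℓ with
  | zero => intro _; simp [slack_zero n hnn]
  | succ ℓ ih =>
    intro hℓ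
    have ih := ih (by omega)
    by_cases hc : ((ℓ + 1 : ℕ) : ℤ) < d ℓ
    · exact h (ℓ + 1) (by omega) hℓ hc
    have hmono : (t : ℤ) * min (ℓ : ℤ) 2 ≤ t * min ((ℓ + 1 : ℕ) : ℤ) 2 := by
      gcongr; omega
    have hs := slack_succ d (n := n) (ℓ := ℓ) (by omega)
    have ht := slackTail_nonneg n d ℓ
    rcases lt_or_eq_of_le (not_lt.1 hc) with hlt | heq
    · omega
    -- here `d ℓ = ℓ + 1`: the slack drops by at most one, and parity rules out a bad drop
    have hge : -1 ≤ slack n d (ℓ + 1) + t * min ((ℓ + 1 : ℕ) : ℤ) 2 := by omega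
    rcases Nat.eq_zero_or_pos ℓ with rfl | hpos
    · have he := even_slack heven hℓ (fun i hi => (hd (by omega : 0 ≤ i)).trans heq.le)
      have h0 := slack_zero n hnn
      have h5 : -1 ≤ slack n d (0 + 1) := by simp at heq; omega
      have h6 : 0 ≤ slack n d (0 + 1) := by
        obtain ⟨k, hk⟩ := he; omega
      exact add_nonneg h6 (by positivity)
    · have he := even_slack heven hℓ
        (fun i hi => (hd (by omega : ℓ ≤ i)).trans heq.le)
      have : min ((ℓ + 1 : ℕ) : ℤ) 2 = 2 := by omega
      rw [this] at hge ⊢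
      obtain ⟨k, hk⟩ := he
      omega

/-! ### The greedy reduction -/

/-- The sequence `d` with the entries at the two positions `x ≠ y` decreased by one. -/
def decPair (d : ℕ → ℤ) (x y i : ℕ) : ℤ := d i - ((if i = x then 1 else 0) + (if i = y then 1 else 0))

/-- The decreased entries still reach the cap `ℓ`, so only those before `ℓ` affect the slack. -/
theorem slack_decPair {n : ℕ} (d : ℕ → ℤ) {x y : ℕ} {ℓ : ℕ} (hx : (ℓ : ℤ) < d x) (hy : (ℓ : ℤ) < d y)
    (hxy : x ≠ y) :
    slack n (decPair d x y) ℓ = slack n d ℓ + ((if x < ℓ then 1 else 0) + (if y < ℓ then 1 else 0)) := by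
  unfold slack
  have h1 : ∀ i ∈ Finset.Ico ℓ n, min (ℓ : ℤ) (decPair d x y i) = min (ℓ : ℤ) (d i) := by
    intro i _
    unfold decPair
    by_cases h : i = x
    · subst h; rw [if_pos rfl, if_neg hxy]; omega
    · by_cases h' : i = y
      · subst h'; rw [if_pos rfl, if_neg h]; omega
      · rw [if_neg h, if_neg h']; simp
  rw [Finset.sum_congr rfl h1]
  unfold decPair
  simp only [Finset.sum_sub_distrib, Finset.sum_add_distrib, Finset.sum_ite_eq', Finset.mem_range]
  ring

/-- On a run of entries equal to `c`, and up to index `c + 1`, the function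
`slack ℓ + (t + 1) * min ℓ 2` is concave, strictly at `2` because of the kink of `min ℓ 2`. -/
theorem slope_antitone {n : ℕ} {d : ℕ → ℤ} {c : ℤ} {p K t : ℕ} (hK : K ≤ n) (hKc : (K : ℤ) ≤ c + 1)
    (hrun : ∀ i, p ≤ i → i < K → d i = c) {g : ℕ → ℤ}
    (hg : ∀ ℓ, g ℓ = slack n d ℓ + (t + 1) * min (ℓ : ℤ) 2) {ℓ : ℕ} (hp : p ≤ ℓ) (hℓ : ℓ + 1 < K) :
    g (ℓ + 2) - g (ℓ + 1) + (if ℓ = 1 then 1 else 0) ≤ g (ℓ + 1) - g ℓ := by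
  have e1 := hrun ℓ hp (by omega)
  have e2 := hrun (ℓ + 1) (by omega) (by omega)
  have h1 := slack_succ d (n := n) (ℓ := ℓ) (by omega)
  have h2 := slack_succ d (n := n) (ℓ := ℓ + 1) (by omega)
  have h3 := slackTail_succ_le (n := n) (d := d) (ℓ := ℓ) (by omega) (by rw [e2]; omega)
  rw [e1] at h1
  rw [e2] at h2
  have hkink : ((t : ℤ) + 1) * min ((ℓ + 2 : ℕ) : ℤ) 2 - (t + 1) * min ((ℓ + 1 : ℕ) : ℤ) 2
      + (if ℓ = 1 then 1 else 0) ≤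
      (t + 1) * min ((ℓ + 1 : ℕ) : ℤ) 2 - (t + 1) * min (ℓ : ℤ) 2 := by
    rcases Nat.lt_or_ge ℓ 2 with h | h
    · interval_cases ℓ
      · norm_num; linarith
      · norm_num; linarith
    · have a1 : min ((ℓ + 2 : ℕ) : ℤ) 2 = 2 := by omega
      have a2 : min ((ℓ + 1 : ℕ) : ℤ) 2 = 2 := by omega
      have a3 : min (ℓ : ℤ) 2 = 2 := by omega
      rw [a1, a2, a3, if_neg (by omega)]; simp
  rw [hg, hg, hg]
  change slack n d (ℓ + 2) = _ at h2
  push_cast at *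
  omega

/-- An integer sequence that is concave up to `K`, strictly at `2`, and nonnegative at `K`: if its
slope at `ℓ` is negative, descending to `K` takes `K - ℓ` steps of at least one; otherwise all
earlier slopes are nonnegative, and the one before the kink is positive. -/
theorem chord {g : ℕ → ℤ} {p K : ℕ} (hp : p ≤ 1)
    (hconc : ∀ ℓ, p ≤ ℓ → ℓ + 1 < K →
      g (ℓ + 2) - g (ℓ + 1) + (if ℓ = 1 then 1 else 0) ≤ g (ℓ + 1) - g ℓ)
    (hK : 0 ≤ g K) {ℓ : ℕ} (h2 : 2 ≤ ℓ) (hℓ : ℓ < K) :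
    (K : ℤ) - ℓ ≤ g ℓ ∨ (1 ≤ g 2 - g 1 ∧ g 2 ≤ g ℓ) := by
  rcases lt_or_ge (g (ℓ + 1) - g ℓ) 0 with hs | hs
  · left
    have key : ∀ j, ℓ + j < K → g (ℓ + j + 1) - g (ℓ + j) ≤ -1 ∧ g (ℓ + j + 1) ≤ g ℓ - (j + 1) := by
      intro j
      induction j with
      | zero => intro _; simp only [add_zero, Nat.cast_zero]; omega
      | succ j ih =>
        intro hj
        have ih := ih (by omega)
        have := hconc (ℓ + j) (by omega) (by omega)
        rw [if_neg (by omega)] at this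
        have e : ℓ + (j + 1) + 1 = ℓ + j + 2 := by ring
        have e' : ℓ + (j + 1) = ℓ + j + 1 := by ring
        rw [e, e']
        push_cast
        omega
    obtain ⟨j, rfl⟩ : ∃ j, K = ℓ + j + 1 := ⟨K - ℓ - 1, by omega⟩
    have := (key j (by omega)).2
    push_cast
    omega
  · right
    have key : ∀ j, j + 2 ≤ ℓ → 0 ≤ g (ℓ - j + 1) - g (ℓ - j) ∧ g (ℓ - j) ≤ g ℓ := by
      intro j
      induction j with
      | zero => intro _; simpa using hs
      | succ j ih =>
        intro hj
        have ih := ih (by omega)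
        obtain ⟨q, hq⟩ : ∃ q, ℓ - (j + 1) = q := ⟨_, rfl⟩
        have e : ℓ - j = q + 1 := by omega
        rw [e] at ih
        have := hconc q (by omega) (by omega)
        rw [if_neg (by omega)] at this
        rw [hq]
        have e2 : q + 1 + 1 = q + 2 := rfl
        rw [e2] at ih
        omega
    have k2 := key (ℓ - 2) (by omega)
    have e : ℓ - (ℓ - 2) = 2 := by omega
    rw [e] at k2
    have := hconc 1 hp (by omega)
    norm_num at this k2
    omega

theorem decPair_antitone {d : ℕ → ℤ} (hd : Antitone d) {c : ℤ} {x k : ℕ} (hk : 2 ≤ k)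
    (hrun : ∀ i, 1 ≤ i → i < k → d i = c) (hkc : d k < c)
    (hx : (x = 0 ∧ c < d 0) ∨ (x + 2 = k)) : Antitone (decPair d x (k - 1)) := by
  refine antitone_nat_of_succ_le fun i => ?_
  have h1 := hd (Nat.le_succ i)
  have h2 := hrun i
  have h3 := hrun (i + 1)
  unfold decPair
  rcases lt_trichotomy (i + 1) k with h | h | h
  · rw [if_neg (by omega : i ≠ k - 1)]
    grind
  · subst h
    grind
  · grind

/-- If the conditions hold for `t + 1` and some Erdős–Gallai inequality fails, an edge can be removed
so that all hypotheses persist, with `t` in place of `t + 1`. -/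
theorem greedy_step {n t : ℕ} {d : ℕ → ℤ} (hd : Antitone d) (hnn : ∀ i, 0 ≤ d i)
    (hsupp : ∀ i, n ≤ i → d i = 0) (heven : Even (∑ i ∈ Finset.range n, d i))
    (hdom : d 0 ≤ ∑ i ∈ Finset.Ico 1 n, d i)
    (hC : ∀ ℓ ≤ n, 0 ≤ slack n d ℓ + ((t : ℤ) + 1) * min (ℓ : ℤ) 2)
    (hbad : ∃ ℓ ≤ n, slack n d ℓ < 0) :
    ∃ x y, x < y ∧ y < n ∧ Antitone (decPair d x y) ∧ (∀ i, 0 ≤ decPair d x y i) ∧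
      (∀ i, n ≤ i → decPair d x y i = 0) ∧ Even (∑ i ∈ Finset.range n, decPair d x y i) ∧
      decPair d x y 0 ≤ ∑ i ∈ Finset.Ico 1 n, decPair d x y i ∧
      ∀ ℓ ≤ n, 0 ≤ slack n (decPair d x y) ℓ + t * min (ℓ : ℤ) 2 := by
  -- if `d 1 ≤ 1`, all Erdős–Gallai inequalities hold
  have hc2 : 2 ≤ d 1 := by
    by_contra hlt
    have hall := slack_all hd hnn heven 0 (fun ℓ h1 hℓn hdℓ => by
      have : ℓ = 1 := by
        by_contra hne
        have := hd (by omega : 1 ≤ ℓ - 1)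
        omega
      subst this
      unfold slack
      rw [Finset.sum_congr rfl (g := d) (fun i hi => min_eq_right (by
        have := hd (Finset.mem_Ico.1 hi).1
        push_cast; omega))]
      simpa using hdom)
    obtain ⟨ℓ, hℓ, hneg⟩ := hbad
    have := hall ℓ hℓ
    simp at this
    omega
  obtain ⟨c, hc⟩ : ∃ c, d 1 = c := ⟨_, rfl⟩
  rw [hc] at hc2
  -- `k` is the end of the run of entries equal to `c = d 1`
  obtain ⟨k, hk2, hkn, hrun, hkc⟩ : ∃ k, 2 ≤ k ∧ k ≤ n ∧ (∀ i, 1 ≤ i → i < k → d i = c) ∧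
      d k < c := by
    have hex : ∃ k, d k < c := ⟨n, by rw [hsupp n le_rfl]; omega⟩
    classical
    have hspec := Nat.find_spec hex
    have hmin : ∀ i < Nat.find hex, ¬ d i < c := fun i hi => Nat.find_min hex hi
    refine ⟨Nat.find hex, ?_, ?_, ?_, hspec⟩
    · by_contra hlt
      have := hd (by omega : Nat.find hex ≤ 1)
      omega
    · exact Nat.find_min' hex (by rw [hsupp n le_rfl]; omega)
    · intro i hi hik
      have := hmin i hik
      have := hd hi
      omega
  have h01 : c ≤ d 0 := hc ▸ hd (by omega)
  obtain ⟨x, hx⟩ : ∃ x, (x = 0 ∧ c < d 0) ∨ (x + 2 = k ∧ d 0 = c) := by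
    rcases h01.lt_or_eq with h | h
    · exact ⟨0, Or.inl ⟨rfl, h⟩⟩
    · exact ⟨k - 2, Or.inr ⟨by omega, h.symm⟩⟩
  have hxy : x < k - 1 := by omega
  have hdx : c ≤ d x := by
    rcases hx with ⟨rfl, h⟩ | ⟨h, h'⟩
    · omega
    · rcases Nat.eq_zero_or_pos x with rfl | h0
      · exact h01
      · exact (hrun x h0 (by omega)).ge
  have hdy : d (k - 1) = c := hrun _ (by omega) (by omega)
  have hanti : Antitone (decPair d x (k - 1)) :=
    decPair_antitone hd hk2 hrun hkc (hx.imp id And.left)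
  have hnn' : ∀ i, 0 ≤ decPair d x (k - 1) i := by
    intro i
    have := hnn i
    unfold decPair
    grind
  have heven' : Even (∑ i ∈ Finset.range n, decPair d x (k - 1) i) := by
    unfold decPair
    simp only [Finset.sum_sub_distrib, Finset.sum_add_distrib, Finset.sum_ite_eq',
      Finset.mem_range]
    rw [if_pos (by omega), if_pos (by omega)]
    exact heven.sub (by decide)
  refine ⟨x, k - 1, hxy, by omega, hanti, hnn', ?_, heven', ?_, ?_⟩
  · intro i hi
    unfold decPair
    rw [hsupp i hi, if_neg (by omega), if_neg (by omega)]; simp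
  · unfold decPair
    simp only [Finset.sum_sub_distrib, Finset.sum_add_distrib, Finset.sum_ite_eq',
      Finset.mem_Ico]
    rw [if_neg (by omega : ¬ 0 = k - 1), if_pos (by omega : 1 ≤ k - 1 ∧ k - 1 < n)]
    rcases Nat.eq_zero_or_pos x with rfl | hx0
    · simpa using hdom
    · rw [if_neg (by omega), if_pos (by omega)]
      have : d 1 + d 2 ≤ ∑ i ∈ Finset.Ico 1 n, d i := by
        have h12 : ({1, 2} : Finset ℕ) ⊆ Finset.Ico 1 n := by
          intro i hi; simp at hi; simp; omega
        have := Finset.sum_le_sum_of_subset_of_nonneg h12 (f := d) (fun i _ _ => hnn i)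
        simpa using this
      have h2 := hrun 2 (by omega) (by omega)
      omega
  · refine slack_all hanti hnn' heven' t fun ℓ h1 hℓn hℓ => ?_
    have hℓc : (ℓ : ℤ) < c := by
      rcases Nat.lt_or_ge ℓ 2 with h | h
      · omega
      · have h5 := hd (by omega : 1 ≤ ℓ - 1)
        unfold decPair at hℓ
        grind
    rw [slack_decPair d (by omega) (by omega) (by omega)]
    obtain ⟨g, hg⟩ : ∃ g : ℕ → ℤ, ∀ ℓ, g ℓ = slack n d ℓ + (t + 1) * min (ℓ : ℤ) 2 :=
      ⟨_, fun _ => rfl⟩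
    suffices min (ℓ : ℤ) 2 - ((if x < ℓ then 1 else 0) + (if k - 1 < ℓ then 1 else 0)) ≤ g ℓ by
      rw [hg] at this; linarith
    have hgnn : ∀ i ≤ n, 0 ≤ g i := fun i hi => by rw [hg]; exact hC i hi
    have hgℓ := hgnn ℓ hℓn
    -- concavity holds up to the end of the run, or up to index `c + 1`
    obtain ⟨K, hKk, hKc, hK⟩ : ∃ K, K ≤ k ∧ (K : ℤ) ≤ c + 1 ∧ (K = k ∨ (K : ℤ) = c + 1) := by
      rcases le_total (k : ℤ) (c + 1) with h | h
      · exact ⟨k, le_rfl, h, Or.inl rfl⟩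
      · exact ⟨(c + 1).toNat, by omega, by omega, Or.inr (by omega)⟩
    have hgK := hgnn K (by omega)
    have hconc1 : ∀ ℓ, 1 ≤ ℓ → ℓ + 1 < K →
        g (ℓ + 2) - g (ℓ + 1) + (if ℓ = 1 then 1 else 0) ≤ g (ℓ + 1) - g ℓ :=
      fun ℓ hp hℓ => slope_antitone (by omega) hKc
        (fun i hi hiK => hrun i hi (by omega)) hg hp hℓ
    rcases hx with ⟨rfl, _⟩ | ⟨hxk, hd0⟩
    · rw [if_pos (by omega)]
      rcases Nat.lt_or_ge ℓ 2 with h | h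
      · grind
      · by_cases hlk : k - 1 < ℓ
        · rw [if_pos hlk]; omega
        · rw [if_neg hlk]
          have := hgnn 1 (by omega)
          rcases chord le_rfl hconc1 hgK h (by omega) with h' | h' <;> omega
    · have hconc0 : ∀ ℓ, 0 ≤ ℓ → ℓ + 1 < K →
          g (ℓ + 2) - g (ℓ + 1) + (if ℓ = 1 then 1 else 0) ≤ g (ℓ + 1) - g ℓ := by
        refine fun ℓ hp hℓ => slope_antitone (p := 0) (by omega) hKc (fun i hi hiK => ?_) hg hp hℓ
        rcases Nat.eq_zero_or_pos i with rfl | h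
        · exact hd0
        · exact hrun i h (by omega)
      have hg0 : g 0 = 0 := by rw [hg, slack_zero n hnn]; simp
      rcases Nat.lt_or_ge ℓ 2 with h | h
      · have hl1 : ℓ = 1 := by omega
        subst hl1
        by_cases hxl : x < 1
        · rw [if_pos hxl]; omega
        · have c0 := hconc0 0 le_rfl (by omega)
          have c1 := hconc0 1 (by omega) (by omega)
          have h3 := hgnn 3 (by omega)
          norm_num at c0 c1
          rw [if_neg hxl, if_neg (by omega)]
          omega
      · by_cases hlk : k - 1 < ℓ
        · rw [if_pos hlk, if_pos (by omega)]; omega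
        · have c0 := hconc0 0 le_rfl (by omega)
          norm_num at c0
          rw [if_neg hlk]
          rcases chord zero_le_one hconc0 hgK h (by omega) with h' | h' <;>
            split_ifs <;> omega

/-- The number of edges, with multiplicity, between vertices below `n`. -/
def edgeCount (n : ℕ) (b : ℕ → ℕ → ℤ) : ℤ :=
  ∑ v ∈ Finset.range n, ∑ u ∈ Finset.range n, if v < u then b v u else 0


theorem edgeCount_add {n x y : ℕ} (b : ℕ → ℕ → ℤ) (hxy : x < y) (hy : y < n) :
    edgeCount n (fun v u => b v u + edgeMat x y v u) = edgeCount n b + 1 := by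
  unfold edgeCount
  have h : ∀ v u, (if v < u then b v u + edgeMat x y v u else 0) =
      (if v < u then b v u else 0) + (if v = x then (if u = y then 1 else 0) else 0) := by
    intro v u; unfold edgeMat; grind
  simp only [h, Finset.sum_add_distrib]
  congr 1
  have : ∀ v ∈ Finset.range n, (∑ u ∈ Finset.range n, if v = x then (if u = y then (1 : ℤ) else 0)
      else 0) = if v = x then 1 else 0 := by
    intro v _
    split_ifs
    · rw [Finset.sum_ite_eq', if_pos (Finset.mem_range.2 hy)]
    · simp
  rw [Finset.sum_congr rfl this, Finset.sum_ite_eq', if_pos (Finset.mem_range.2 (hxy.trans hy))]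

/-- Under the conditions for `t`, the sequence is the degree sequence of a simple graph `a` plus a
loopless multigraph `b` with at most `t` edges. -/
theorem exists_simple_add_excess (n t : ℕ) (d : ℕ → ℤ) (hd : Antitone d) (hnn : ∀ i, 0 ≤ d i)
    (hsupp : ∀ i, n ≤ i → d i = 0) (heven : Even (∑ i ∈ Finset.range n, d i))
    (hdom : d 0 ≤ ∑ i ∈ Finset.Ico 1 n, d i)
    (hC : ∀ ℓ ≤ n, 0 ≤ slack n d ℓ + (t : ℤ) * min (ℓ : ℤ) 2) :
    ∃ a b : ℕ → ℕ → ℤ, IsAdj a ∧ (∀ v u, b v u = b u v) ∧ (∀ v, b v v = 0) ∧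
      (∀ v u, 0 ≤ b v u) ∧ (∀ v < n, vdeg n a v + vdeg n b v = d v) ∧ edgeCount n b ≤ t := by
  induction t generalizing d with
  | zero =>
    obtain ⟨a, ha, hdeg⟩ := erdosGallai hd hnn heven (fun r hr => by
      have := hC (r + 1) hr
      unfold slack at this
      push_cast at this
      linarith)
    exact ⟨a, fun _ _ => 0, ha, by simp, by simp, by simp, by simpa [vdeg] using hdeg,
      by simp [edgeCount]⟩
  | succ t ih =>
    push_cast at hC
    by_cases hbad : ∃ ℓ ≤ n, slack n d ℓ < 0
    · obtain ⟨x, y, hxy, hy, h1, h2, h3, h4, h5, h6⟩ :=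
        greedy_step hd hnn hsupp heven hdom hC hbad
      obtain ⟨a, b, ha, hb1, hb2, hb3, hdeg, hcount⟩ := ih _ h1 h2 h3 h4 h5 h6
      refine ⟨a, fun v u => b v u + edgeMat x y v u, ha, ?_, ?_, ?_, ?_, ?_⟩
      · intro v u; simp only; rw [hb1, edgeMat_symm]
      · intro v; simp only; rw [hb2, edgeMat_self hxy.ne, add_zero]
      · intro v u
        have := hb3 v u
        simp only [edgeMat]
        split_ifs <;> omega
      · intro v hv
        have := hdeg v hv
        rw [vdeg_add b hxy.ne (hxy.trans hy) hy]
        unfold decPair at this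
        linarith
      · rw [edgeCount_add b hxy hy]; push_cast; linarith
    · push Not at hbad
      obtain ⟨a, b, ha, hb1, hb2, hb3, hdeg, hcount⟩ := ih d hd hnn hsupp heven hdom
        (fun ℓ hℓ => by have := hbad ℓ hℓ; positivity)
      exact ⟨a, b, ha, hb1, hb2, hb3, hdeg, hcount.trans (by push_cast; omega)⟩

/-! ### Necessity -/

/-- The bound on the degree sum over `S`: the pairs inside `S`, the pairs leaving `S`, and the excess
edges, each of which has at most `min #S 2` endpoints in `S`. -/
theorem Multigraph.sum_deg_le {N : ℕ} (H : Multigraph N) (S : Finset (Fin N)) :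
    ∑ v ∈ S, H.deg v ≤ S.card * (S.card - 1) + ∑ v ∈ Sᶜ, min S.card (H.deg v) +
      H.totMult * min S.card 2 := by
  have hm : ∀ v u, H.m v u = min (H.m v u) 1 + (H.m v u - 1) := fun v u => by omega
  have hdeg : ∀ v, H.deg v = ∑ u ∈ S, min (H.m v u) 1 + ∑ u ∈ Sᶜ, min (H.m v u) 1 +
      ∑ u, (H.m v u - 1) := by
    intro v
    rw [Finset.sum_add_sum_compl, ← Finset.sum_add_distrib]
    exact Finset.sum_congr rfl fun u _ => hm v u
  rw [Finset.sum_congr rfl (fun v _ => hdeg v), Finset.sum_add_distrib, Finset.sum_add_distrib]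
  refine add_le_add (add_le_add ?_ ?_) ?_
  · rw [← smul_eq_mul, ← Finset.sum_const]
    refine Finset.sum_le_sum fun v hv => ?_
    rw [← Finset.card_erase_of_mem hv, ← Finset.add_sum_erase _ _ hv, H.loopless v,
      Finset.card_eq_sum_ones]
    simp only [zero_le, min_eq_left, zero_add]
    exact Finset.sum_le_sum fun u _ => min_le_right _ _
  · rw [Finset.sum_comm]
    refine Finset.sum_le_sum fun u _ => le_min ?_ ?_
    · rw [Finset.card_eq_sum_ones]
      exact Finset.sum_le_sum fun v _ => min_le_right _ _
    · unfold Multigraph.deg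
      refine (Finset.sum_le_sum fun v _ => ?_).trans
        (Finset.sum_le_sum_of_subset (Finset.subset_univ S))
      rw [H.symm v u]; exact min_le_left _ _
  · have hrow : ∀ v, ∑ u, (H.m v u - 1) =
        ∑ u ∈ Finset.univ.filter (fun u => v < u), (H.m v u - 1) +
          ∑ u ∈ Finset.univ.filter (fun u => u < v), (H.m u v - 1) := by
      intro v
      rw [Finset.sum_filter, Finset.sum_filter, ← Finset.sum_add_distrib]
      refine Finset.sum_congr rfl fun u _ => ?_
      rcases lt_trichotomy v u with h | h | h
      · rw [if_pos h, if_neg h.not_gt, add_zero]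
      · subst h; simp [H.loopless]
      · rw [if_neg h.not_gt, if_pos h, H.symm v u, zero_add]
    have htot' : H.totMult =
        ∑ v, ∑ u ∈ Finset.univ.filter (fun u => u < v), (H.m u v - 1) := by
      unfold Multigraph.totMult
      simp only [Finset.sum_filter]
      rw [Finset.sum_comm]
    rcases Nat.lt_or_ge S.card 2 with h | h
    · rw [min_eq_left h.le]
      interval_cases hc : S.card
      · rw [Finset.card_eq_zero.1 hc]; simp
      · obtain ⟨w, rfl⟩ := Finset.card_eq_one.1 hc
        rw [Finset.sum_singleton, hrow w, mul_one]
        unfold Multigraph.totMult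
        rw [← Finset.add_sum_erase Finset.univ _ (Finset.mem_univ w)]
        refine Nat.add_le_add_left ?_ _
        rw [Finset.sum_filter]
        rw [← Finset.add_sum_erase Finset.univ _ (Finset.mem_univ w), if_neg (lt_irrefl w),
          zero_add]
        refine Finset.sum_le_sum fun u _ => ?_
        split_ifs with hu
        · exact Finset.single_le_sum (f := fun x => H.m u x - 1) (fun _ _ => Nat.zero_le _)
            (Finset.mem_filter.2 ⟨Finset.mem_univ w, hu⟩)
        · exact Nat.zero_le _
    · rw [min_eq_right h]
      refine (Finset.sum_le_sum_of_subset (Finset.subset_univ S)).trans ?_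
      rw [Finset.sum_congr rfl (fun v _ => hrow v), Finset.sum_add_distrib, ← htot']
      unfold Multigraph.totMult
      omega

theorem map_fin_eq (n : ℕ) (d : ℕ → ℕ) :
    Multiset.map (fun i : Fin n => d (i + 1)) Finset.univ.val =
      Multiset.map d (Finset.Icc 1 n).val := by
  have : Finset.Icc 1 n = Finset.univ.map
      ⟨fun i : Fin n => (i : ℕ) + 1, fun _ _ h => Fin.ext (Nat.succ_injective h)⟩ := by
    ext i
    simp only [Finset.mem_Icc, Finset.mem_map, Finset.mem_univ, true_and]
    constructor
    · intro h
      exact ⟨⟨i - 1, by omega⟩, Nat.sub_add_cancel h.1⟩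
    · rintro ⟨j, rfl⟩
      exact ⟨Nat.le_add_left _ _, j.2⟩
  rw [this, Finset.map_val, Multiset.map_map]
  rfl

/-- Families with the same multiset of values agree up to a bijection of their index types. -/
theorem exists_equiv_of_map_eq {α β γ : Type} [Fintype α] [Fintype β] [DecidableEq γ]
    {f : α → γ} {g : β → γ}
    (h : Multiset.map f Finset.univ.val = Multiset.map g Finset.univ.val) :
    ∃ e : α ≃ β, ∀ v, f v = g (e v) := by
  have hc : ∀ c, Nonempty ({a // f a = c} ≃ {b // g b = c}) := by
    intro c
    rw [← Fintype.card_eq, Fintype.card_subtype, Fintype.card_subtype]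
    have := congrArg (Multiset.count c) h
    rw [Multiset.count_map, Multiset.count_map] at this
    simpa only [Finset.card, Finset.filter_val, eq_comm] using this
  exact ⟨Equiv.ofFiberEquiv fun c => (hc c).some, fun v => (Equiv.ofFiberEquiv_map _ v).symm⟩

/-! ### Passing to zero-based indices -/

/-- The sequence `d 1, …, d n` reindexed from `0`, cast to `ℤ` and extended by zeros. -/
def shift (n : ℕ) (d : ℕ → ℕ) (i : ℕ) : ℤ := if i < n then (d (i + 1) : ℤ) else 0

theorem sum_shift_range {n ℓ : ℕ} (d : ℕ → ℕ) (h : ℓ ≤ n) :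
    ∑ i ∈ Finset.range ℓ, shift n d i = ((∑ i ∈ Finset.Icc 1 ℓ, d i : ℕ) : ℤ) := by
  rw [Finset.range_eq_Ico, ← Finset.Ico_add_one_right_eq_Icc, ← Finset.sum_Ico_add' d 0 ℓ 1]
  push_cast
  refine Finset.sum_congr rfl fun i hi => if_pos ?_
  have := Finset.mem_Ico.1 hi
  omega

theorem sum_shift_Ico {n ℓ : ℕ} (d : ℕ → ℕ) (F : ℤ → ℤ) (G : ℕ → ℕ)
    (hFG : ∀ k : ℕ, F k = G k) :
    ∑ i ∈ Finset.Ico ℓ n, F (shift n d i) =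
      ((∑ i ∈ Finset.Icc (ℓ + 1) n, G (d i) : ℕ) : ℤ) := by
  rw [← Finset.Ico_add_one_right_eq_Icc, ← Finset.sum_Ico_add' (fun i => G (d i)) ℓ n 1]
  push_cast
  refine Finset.sum_congr rfl fun i hi => ?_
  have := Finset.mem_Ico.1 hi
  rw [shift, if_pos this.2, hFG]

theorem slack_shift {n ℓ t : ℕ} (d : ℕ → ℕ) (h1 : 1 ≤ ℓ) (h : ℓ ≤ n) :
    0 ≤ slack n (shift n d) ℓ + t * min (ℓ : ℤ) 2 ↔
      ∑ i ∈ Finset.Icc 1 ℓ, d i ≤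
        ℓ * (ℓ - 1) + (∑ i ∈ Finset.Icc (ℓ + 1) n, min ℓ (d i)) + t * min ℓ 2 := by
  unfold slack
  rw [sum_shift_range d h, sum_shift_Ico d (fun z => min (ℓ : ℤ) z) (fun k => min ℓ k) (by simp)]
  obtain ⟨ℓ, rfl⟩ : ∃ k, ℓ = k + 1 := ⟨ℓ - 1, by omega⟩
  rw [← Nat.cast_le (α := ℤ)]
  generalize (∑ i ∈ Finset.Icc 1 (ℓ + 1), d i) = A
  generalize (∑ i ∈ Finset.Icc (ℓ + 1 + 1) n, min (ℓ + 1) (d i)) = B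
  rw [Nat.add_sub_cancel]
  push_cast
  constructor <;> intro h <;> linarith

theorem totGraphic_necessity {n t : ℕ} {d : ℕ → ℕ} (h : TotGraphic t n d) {ℓ : ℕ} (hℓ : ℓ ≤ n) :
    ∑ i ∈ Finset.Icc 1 ℓ, d i ≤
      ℓ * (ℓ - 1) + (∑ i ∈ Finset.Icc (ℓ + 1) n, min ℓ (d i)) + t * min ℓ 2 := by
  obtain ⟨N, H, hreal, htot⟩ := h
  unfold Multigraph.Realizes at hreal
  rw [← map_fin_eq] at hreal
  obtain ⟨e, he⟩ := exists_equiv_of_map_eq hreal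
  obtain ⟨S, hS⟩ : ∃ S : Finset (Fin N), S = Finset.univ.filter (fun v => (e v : ℕ) < ℓ) :=
    ⟨_, rfl⟩
  have transfer : ∀ (p : ℕ → Prop) [DecidablePred p] (F : ℕ → ℕ),
      ∑ v ∈ Finset.univ.filter (fun v => p (e v)), F (H.deg v) =
        ∑ i ∈ (Finset.range n).filter p, F (d (i + 1)) := by
    intro p _ F
    rw [Finset.sum_filter, Finset.sum_filter,
      Finset.sum_range (fun i => if p i then F (d (i + 1)) else 0),
      ← Equiv.sum_comp e (fun i : Fin n => if p i then F (d (i + 1)) else 0)]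
    simp only [he]
  have r1 : (Finset.range n).filter (fun i => i < ℓ) = Finset.Ico 0 ℓ := by
    ext i; simp; omega
  have r2 : (Finset.range n).filter (fun i => ¬ i < ℓ) = Finset.Ico ℓ n := by
    ext i; simp; omega
  have hcard : S.card = ℓ := by
    have := transfer (fun i => i < ℓ) (fun _ => 1)
    rw [r1, ← hS] at this
    simpa using this
  have hcompl : Sᶜ = Finset.univ.filter (fun v => ¬ (e v : ℕ) < ℓ) := by
    rw [hS]; ext v; simp
  have key := H.sum_deg_le S
  rw [hcard, hcompl, hS, transfer (fun i => i < ℓ) (fun k => k),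
    transfer (fun i => ¬ i < ℓ) (fun k => min ℓ k), r1, r2,
    Finset.sum_Ico_add' d 0 ℓ 1, Finset.sum_Ico_add' (fun i => min ℓ (d i)) ℓ n 1,
    Finset.Ico_add_one_right_eq_Icc, Finset.Ico_add_one_right_eq_Icc] at key
  exact key.trans (by gcongr)

/-! ### The characterization -/

/-- Let `d 1, …, d n` be a degree sequence with
`d 1 ≤ d 2 + ⋯ + d n`, let `t > 0`, and let `m(d)` be the largest index `i`
with `d i > i` (and `m(d) = 0` if there is none, e.g. if `d 1 = 1`). Then `d`
is `t`-tot-graphic iff for every `ℓ = 1, …, m(d)`: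
`∑_{i=1}^ℓ d i ≤ ℓ(ℓ-1) + ∑_{i=ℓ+1}^n min ℓ (d i) + t * min ℓ 2`. -/
theorem stmt1 (n t : ℕ) (hn : 0 < n) (ht : 0 < t) (d : ℕ → ℕ)
    (hpos : ∀ i ∈ Finset.Icc 1 n, 0 < d i)
    (hmono : AntitoneOn d (Set.Icc 1 n))
    (heven : Even (∑ i ∈ Finset.Icc 1 n, d i))
    (hdom : d 1 ≤ ∑ i ∈ Finset.Icc 2 n, d i) :
    TotGraphic t n d ↔
      ∀ ℓ ∈ Finset.Icc 1 (Nat.findGreatest (fun i => i < d i) n),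
        ∑ i ∈ Finset.Icc 1 ℓ, d i ≤
          ℓ * (ℓ - 1) + (∑ i ∈ Finset.Icc (ℓ + 1) n, min ℓ (d i)) + t * min ℓ 2 := by
  constructor
  · intro h ℓ hℓ
    exact totGraphic_necessity h ((Finset.mem_Icc.1 hℓ).2.trans (Nat.findGreatest_le n))
  intro h
  have hanti : Antitone (shift n d) := by
    intro i j hij
    unfold shift
    by_cases hj : j < n
    · rw [if_pos hj, if_pos (by omega)]
      exact_mod_cast hmono (by simp; omega) (by simp; omega) (by omega)
    · rw [if_neg hj]; split_ifs <;> omega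
  have hnn : ∀ i, 0 ≤ shift n d i := fun i => by unfold shift; split_ifs <;> omega
  have hev : Even (∑ i ∈ Finset.range n, shift n d i) := by
    rw [sum_shift_range d le_rfl]; exact_mod_cast heven
  have hC := slack_all hanti hnn hev t fun ℓ h1 hℓn hℓ => by
    rw [slack_shift d h1 hℓn]
    refine h ℓ (Finset.mem_Icc.2 ⟨h1, Nat.le_findGreatest hℓn ?_⟩)
    rw [shift, if_pos (by omega), Nat.sub_add_cancel h1] at hℓ
    exact_mod_cast hℓ
  obtain ⟨a, b, ⟨ha1, ha2, ha3⟩, hb1, hb2, hb3, hdeg, hcount⟩ :=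
    exists_simple_add_excess n t (shift n d) hanti hnn
      (fun i hi => if_neg (by omega)) hev
      (by
        rw [sum_shift_Ico d (fun z => z) (fun k => k) (fun _ => rfl), shift, if_pos hn]
        exact_mod_cast hdom) hC
  have hab : ∀ v u, 0 ≤ a v u + b v u := fun v u => by
    have := ha3 v u
    have := hb3 v u
    omega
  refine ⟨n, ⟨fun v u => (a v u + b v u).toNat, fun v u => ?_, fun v => ?_⟩, ?_, ?_⟩
  · rw [ha1, hb1]
  · rw [ha2, hb2]; rfl
  · unfold Multigraph.Realizes
    rw [← map_fin_eq]
    congr 1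
    funext v
    zify [Multigraph.deg]
    have := hdeg v v.2
    rw [shift, if_pos v.2] at this
    rw [← this, vdeg, vdeg, ← Finset.sum_add_distrib,
      Finset.sum_range (fun u => a v u + b v u)]
    exact Finset.sum_congr rfl fun u _ => Int.toNat_of_nonneg (hab v u)
  · zify [Multigraph.totMult]
    refine le_trans ?_ hcount
    unfold edgeCount
    rw [Finset.sum_range]
    refine Finset.sum_le_sum fun v _ => ?_
    rw [Finset.sum_range, Finset.sum_filter]
    refine Finset.sum_le_sum fun u _ => ?_
    simp only [Fin.lt_def]
    split_ifs
    · have := ha3 v u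
      have := hb3 v u
      omega
    · rfl
end

section
/- Let d be a degree sequence (a nonincreasing finite sequence of positive integers with even sum) and t a positive integer. Then d has a multigraph realization H whose underlying simple graph (one edge for each pair with m ≥ 1) is bipartite and which satisfies TotMult(H) ≤ t, if and only if there exists a balanced partition (a,b) of d such that the pair (a ∘ 1^t, b ∘ 1^t), obtained by appending t copies of 1 to each of a and b, is bigraphic. -/
/-- `m` is a bipartite multigraph with left degrees `a 1, …, a p` and right
degrees `b 1, …, b q` (1-indexed): a matrix of edge multiplicities whose `i`-th
row sum is `a i` and whose `j`-th column sum is `b j`. -/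
def IsBipMG (p q : ℕ) (a b : ℕ → ℕ) (m : ℕ → ℕ → ℕ) : Prop :=
  (∀ i ∈ Finset.Icc 1 p, ∑ j ∈ Finset.Icc 1 q, m i j = a i) ∧
    ∀ j ∈ Finset.Icc 1 q, ∑ i ∈ Finset.Icc 1 p, m i j = b j

/-- Total multiplicity of a bipartite multigraph given as a matrix:
`∑_{(i,j) : m i j ≥ 1} (m i j - 1)` (entries `0` contribute `0`). -/
def bipTotMult (p q : ℕ) (m : ℕ → ℕ → ℕ) : ℕ :=
  ∑ i ∈ Finset.Icc 1 p, ∑ j ∈ Finset.Icc 1 q, (m i j - 1)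

/-- Maximum multiplicity of a bipartite multigraph given as a matrix. -/
def bipMaxMult (p q : ℕ) (m : ℕ → ℕ → ℕ) : ℕ :=
  (Finset.Icc 1 p ×ˢ Finset.Icc 1 q).sup fun ij => m ij.1 ij.2

/-- `(a, b)` (with `a` of length `p` and `b` of length `q`) is a balanced
partition of the sequence `d 1, …, d n`: the concatenation of `a` and `b`
equals `d` as a multiset, and the two sides have equal sums. -/
def IsBalancedPartition (n : ℕ) (d : ℕ → ℕ) (p : ℕ) (a : ℕ → ℕ)
    (q : ℕ) (b : ℕ → ℕ) : Prop :=
  Multiset.map a (Finset.Icc 1 p).val + Multiset.map b (Finset.Icc 1 q).val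
      = Multiset.map d (Finset.Icc 1 n).val ∧
    ∑ i ∈ Finset.Icc 1 p, a i = ∑ j ∈ Finset.Icc 1 q, b j

/-- The pair `(a, b)` is bigraphic: there is a 0/1 matrix with row sums
`a 1, …, a p` and column sums `b 1, …, b q`. -/
def Bigraphic (p q : ℕ) (a b : ℕ → ℕ) : Prop :=
  ∃ m : ℕ → ℕ → ℕ, IsBipMG p q a b m ∧ ∀ i j, m i j ≤ 1

/-! ### Matrices of edge multiplicities -/

/-- Natural numbers `x i` with sum `s` are the fiber sizes of some map from an `s`-element set. -/
lemma exists_fiber_card {I : Type*} [Fintype I] [DecidableEq I] (x : I → ℕ) (s : ℕ)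
    (hs : ∑ i, x i = s) :
    ∃ f : Fin s → I, ∀ i, (∑ k, if f k = i then 1 else 0) = x i := by
  have e : Fin s ≃ (Σ i, Fin (x i)) :=
    (Fintype.equivFinOfCardEq (by simp [hs])).symm
  refine ⟨fun k => (e k).1, fun i => ?_⟩
  rw [e.sum_comp (fun z : Σ i, Fin (x i) => if z.1 = i then 1 else 0), Fintype.sum_sigma]
  rw [Finset.sum_eq_single i (fun j _ hj => by simp [hj]) (by simp)]
  simp

/-- Cutting the excess edge copies: a multiplicity matrix of total multiplicity at most `t`
extends to a 0/1 matrix with `t` further rows and `t` further columns, all of sum one, the sums of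
the old rows and columns being unchanged. -/
lemma exists_leafExtension {I J : Type*} [Fintype I] [Fintype J] [DecidableEq I] [DecidableEq J]
    (m : I → J → ℕ) (t : ℕ) (ht : ∑ i, ∑ j, (m i j - 1) ≤ t) :
    ∃ M : I ⊕ Fin t → J ⊕ Fin t → ℕ, (∀ x y, M x y ≤ 1) ∧
      (∀ x, ∑ y, M x y = Sum.elim (fun i => ∑ j, m i j) (fun _ => 1) x) ∧
      (∀ y, ∑ x, M x y = Sum.elim (fun j => ∑ i, m i j) (fun _ => 1) y) := by
  obtain ⟨s, hs⟩ : ∃ s, s = ∑ i, ∑ j, (m i j - 1) := ⟨_, rfl⟩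
  rw [← hs] at ht
  obtain ⟨r, rfl⟩ := Nat.exists_eq_add_of_le ht
  obtain ⟨f, hf⟩ := exists_fiber_card (fun i => ∑ j, (m i j - 1)) s hs.symm
  obtain ⟨g, hg⟩ := exists_fiber_card (fun j => ∑ i, (m i j - 1)) s
    (by rw [hs, Finset.sum_comm])
  -- The first `s` leaves carry the cut edges, the last `r` are matched with each other.
  let M : I ⊕ (Fin s ⊕ Fin r) → J ⊕ (Fin s ⊕ Fin r) → ℕ := fun x y =>
    match x, y with
    | .inl i, .inl j => min (m i j) 1
    | .inl i, .inr (.inl k) => if f k = i then 1 else 0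
    | .inr (.inl k), .inl j => if g k = j then 1 else 0
    | .inr (.inr k), .inr (.inr l) => if k = l then 1 else 0
    | _, _ => 0
  have hM : ∀ x y, M x y ≤ 1 := by
    rintro (i | k | k) (j | l | l) <;> simp only [M] <;> first | omega | (split_ifs <;> omega)
  have hrow : ∀ x, ∑ y, M x y = Sum.elim (fun i => ∑ j, m i j) (fun _ => 1) x := by
    rintro (i | k | k)
    · simp only [Fintype.sum_sum_type, M, hf, Sum.elim_inl, Finset.sum_const_zero, add_zero]
      rw [← Finset.sum_add_distrib]
      exact Finset.sum_congr rfl fun j _ => by omega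
    · simp [Fintype.sum_sum_type, M]
    · simp [Fintype.sum_sum_type, M]
  have hcol : ∀ y, ∑ x, M x y = Sum.elim (fun j => ∑ i, m i j) (fun _ => 1) y := by
    rintro (j | k | k)
    · simp only [Fintype.sum_sum_type, M, hg, Sum.elim_inl, Finset.sum_const_zero, add_zero]
      rw [← Finset.sum_add_distrib]
      exact Finset.sum_congr rfl fun j _ => by omega
    · simp [Fintype.sum_sum_type, M]
    · simp [Fintype.sum_sum_type, M]
  refine ⟨fun x y => M (Sum.map id finSumFinEquiv.symm x) (Sum.map id finSumFinEquiv.symm y),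
    fun _ _ => hM _ _, fun x => ?_, fun y => ?_⟩
  · refine ((Equiv.sumCongr (Equiv.refl J) finSumFinEquiv.symm).sum_comp
      (fun y => M (Sum.map id finSumFinEquiv.symm x) y)).trans ?_
    rw [hrow]
    cases x <;> rfl
  · refine ((Equiv.sumCongr (Equiv.refl I) finSumFinEquiv.symm).sum_comp
      (fun x => M x (Sum.map id finSumFinEquiv.symm y))).trans ?_
    rw [hcol]
    cases y <;> rfl

/-- Joining half-edges: deleting `t` leaves on each side of a simple bipartite graph and
reconnecting the loose ends gives a multiplicity matrix of total multiplicity at most `t` with the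
same degrees on the core. -/
lemma exists_multigraph_of_leafExtension {I J : Type*} [Fintype I] [Fintype J] [DecidableEq I]
    [DecidableEq J] (t : ℕ) (M : I ⊕ Fin t → J ⊕ Fin t → ℕ) (a : I → ℕ) (b : J → ℕ)
    (hM : ∀ x y, M x y ≤ 1)
    (hrow : ∀ x, ∑ y, M x y = Sum.elim a (fun _ => 1) x)
    (hcol : ∀ y, ∑ x, M x y = Sum.elim b (fun _ => 1) y) :
    ∃ m : I → J → ℕ, (∀ i, ∑ j, m i j = a i) ∧ (∀ j, ∑ i, m i j = b j) ∧
      ∑ i, ∑ j, (m i j - 1) ≤ t := by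
  have hr : ∀ k : Fin t, ∑ j, M (.inr k) (.inl j) + ∑ l, M (.inr k) (.inr l) = 1 := fun k => by
    simpa using hrow (.inr k)
  have hc : ∀ k : Fin t, ∑ i, M (.inl i) (.inr k) + ∑ l, M (.inr l) (.inr k) = 1 := fun k => by
    simpa using hcol (.inr k)
  have hr' := Finset.sum_congr (rfl : (Finset.univ : Finset (Fin t)) = _) fun k _ => hr k
  have hc' := Finset.sum_congr (rfl : (Finset.univ : Finset (Fin t)) = _) fun k _ => hc k
  simp only [Finset.sum_add_distrib, Finset.sum_const, Finset.card_univ, Fintype.card_fin,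
    smul_eq_mul, mul_one] at hr' hc'
  rw [Finset.sum_comm (f := fun k l : Fin t => M (.inr l) (.inr k)), Finset.sum_comm] at hc'
  rw [Finset.sum_comm (f := fun (k : Fin t) j => M (.inr k) (.inl j))] at hr'
  obtain ⟨s, hs⟩ : ∃ s, s = ∑ i, ∑ k, M (.inl i) (.inr k) := ⟨_, rfl⟩
  obtain ⟨f, hf⟩ := exists_fiber_card (fun i => ∑ k, M (.inl i) (.inr k)) s hs.symm
  obtain ⟨g, hg⟩ := exists_fiber_card (fun j => ∑ k, M (.inr k) (.inl j)) s (by omega)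
  -- The edges obtained by joining the loose ends.
  let E : I → J → ℕ := fun i j => ∑ k, if f k = i then (if g k = j then 1 else 0) else 0
  have hE1 : ∀ i, ∑ j, E i j = ∑ k, M (.inl i) (.inr k) := fun i => by
    rw [← hf, Finset.sum_comm]
    refine Finset.sum_congr rfl fun k _ => ?_
    split_ifs <;> simp
  have hE2 : ∀ j, ∑ i, E i j = ∑ k, M (.inr k) (.inl j) := fun j => by
    rw [← hg, Finset.sum_comm]
    refine Finset.sum_congr rfl fun k _ => ?_
    simp
  refine ⟨fun i j => M (.inl i) (.inl j) + E i j, fun i => ?_, fun j => ?_, ?_⟩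
  · rw [Finset.sum_add_distrib, hE1]
    simpa using hrow (.inl i)
  · rw [Finset.sum_add_distrib, hE2]
    simpa using hcol (.inl j)
  · calc ∑ i, ∑ j, (M (.inl i) (.inl j) + E i j - 1) ≤ ∑ i, ∑ j, E i j :=
          Finset.sum_le_sum fun i _ => Finset.sum_le_sum fun j _ => by
            have := hM (.inl i) (.inl j)
            omega
      _ = s := by simp only [hE1, hs]
      _ ≤ t := by omega

/-! ### Sequences indexed from one -/

lemma map_Icc_one_val {α : Type*} (p : ℕ) (a : ℕ → α) :
    Multiset.map a (Finset.Icc 1 p).val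
      = Multiset.map (fun i : Fin p => a (i + 1)) Finset.univ.val := by
  have hinj : Function.Injective fun i : Fin p => (i : ℕ) + 1 := fun i j h =>
    Fin.ext (Nat.add_right_cancel h)
  have h : Finset.Icc 1 p = Finset.univ.map ⟨_, hinj⟩ := by
    ext k
    simp only [Finset.mem_Icc, Finset.mem_map, Finset.mem_univ, true_and,
      Function.Embedding.coeFn_mk]
    constructor
    · rintro ⟨h1, h2⟩
      exact ⟨⟨k - 1, by omega⟩, Nat.sub_add_cancel h1⟩
    · rintro ⟨i, rfl⟩
      omega
  rw [h, Finset.map_val, Multiset.map_map]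
  rfl

lemma sum_Icc_one (p : ℕ) (a : ℕ → ℕ) :
    ∑ i ∈ Finset.Icc 1 p, a i = ∑ i : Fin p, a (i + 1) :=
  congrArg Multiset.sum (map_Icc_one_val p a)

lemma forall_Icc_one (p : ℕ) (P : ℕ → Prop) :
    (∀ i ∈ Finset.Icc 1 p, P i) ↔ ∀ i : Fin p, P (i + 1) := by
  constructor
  · intro h i
    exact h _ (by simp)
  · intro h k hk
    rw [Finset.mem_Icc] at hk
    have := h ⟨k - 1, by omega⟩
    rwa [show k - 1 + 1 = k by omega] at this

lemma exists_seq {p : ℕ} (x : Fin p → ℕ) : ∃ a : ℕ → ℕ, ∀ i : Fin p, a (i + 1) = x i :=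
  ⟨fun k => if h : k - 1 < p then x ⟨k - 1, h⟩ else 0, fun i => by simp⟩

lemma isBipMG_iff (p q : ℕ) (a b : ℕ → ℕ) (m : ℕ → ℕ → ℕ) :
    IsBipMG p q a b m ↔ (∀ i : Fin p, ∑ j : Fin q, m (i + 1) (j + 1) = a (i + 1)) ∧
      ∀ j : Fin q, ∑ i : Fin p, m (i + 1) (j + 1) = b (j + 1) := by
  unfold IsBipMG
  simp only [forall_Icc_one, sum_Icc_one]

lemma bigraphic_iff (p q : ℕ) (a b : ℕ → ℕ) :
    Bigraphic p q a b ↔ ∃ M : Fin p → Fin q → ℕ, (∀ i j, M i j ≤ 1) ∧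
      (∀ i, ∑ j, M i j = a (i + 1)) ∧ ∀ j, ∑ i, M i j = b (j + 1) := by
  constructor
  · rintro ⟨m, hm, h1⟩
    rw [isBipMG_iff] at hm
    exact ⟨fun i j => m (i + 1) (j + 1), fun _ _ => h1 _ _, hm.1, hm.2⟩
  · rintro ⟨M, h1, hr, hc⟩
    refine ⟨fun i j => if h : i - 1 < p ∧ j - 1 < q then M ⟨i - 1, h.1⟩ ⟨j - 1, h.2⟩ else 0,
      ?_, fun i j => ?_⟩
    · rw [isBipMG_iff]
      simpa using ⟨hr, hc⟩
    · dsimp only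
      split_ifs
      · exact h1 _ _
      · omega

/-- The pair `(a ∘ 1^t, b ∘ 1^t)` is bigraphic iff a 0/1 matrix whose rows and columns are split
into a core part and `t` leaves has the corresponding row and column sums. -/
lemma bigraphic_append_iff (p q t : ℕ) (a b : ℕ → ℕ) :
    Bigraphic (p + t) (q + t) (fun i => if i ≤ p then a i else 1)
        (fun j => if j ≤ q then b j else 1) ↔
      ∃ M : Fin p ⊕ Fin t → Fin q ⊕ Fin t → ℕ, (∀ x y, M x y ≤ 1) ∧
        (∀ x, ∑ y, M x y = Sum.elim (fun i : Fin p => a (i + 1)) (fun _ => 1) x) ∧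
        ∀ y, ∑ x, M x y = Sum.elim (fun j : Fin q => b (j + 1)) (fun _ => 1) y := by
  have key : ∀ (p : ℕ) (a : ℕ → ℕ) (x : Fin p ⊕ Fin t),
      (if (finSumFinEquiv x : ℕ) + 1 ≤ p then a ((finSumFinEquiv x : ℕ) + 1) else 1)
        = Sum.elim (fun i : Fin p => a (i + 1)) (fun _ => 1) x := by
    rintro p a (i | k)
    · simp [Nat.succ_le_of_lt i.isLt]
    · simp
  rw [bigraphic_iff]
  constructor
  · rintro ⟨M, h1, hr, hc⟩
    refine ⟨fun x y => M (finSumFinEquiv x) (finSumFinEquiv y), fun _ _ => h1 _ _,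
      fun x => ?_, fun y => ?_⟩
    · rw [finSumFinEquiv.sum_comp (fun y => M (finSumFinEquiv x) y), hr, key]
    · rw [finSumFinEquiv.sum_comp (fun x => M x (finSumFinEquiv y)), hc, key]
  · rintro ⟨M, h1, hr, hc⟩
    refine ⟨fun x y => M (finSumFinEquiv.symm x) (finSumFinEquiv.symm y), fun _ _ => h1 _ _,
      fun x => ?_, fun y => ?_⟩
    · rw [finSumFinEquiv.symm.sum_comp (fun y => M (finSumFinEquiv.symm x) y), hr, ← key,
        Equiv.apply_symm_apply]
    · rw [finSumFinEquiv.symm.sum_comp (fun x => M x (finSumFinEquiv.symm y)), hc, ← key,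
        Equiv.apply_symm_apply]

/-! ### Bipartite multigraphs as matrices -/

lemma map_univ_val_sum {α β γ δ : Type*} [Fintype α] [Fintype β] [Fintype γ] (e : α ⊕ β ≃ γ)
    (f : γ → δ) :
    Multiset.map f Finset.univ.val = Multiset.map (fun i => f (e (.inl i))) Finset.univ.val
      + Multiset.map (fun j => f (e (.inr j))) Finset.univ.val := by
  rw [← Finset.map_univ_equiv e, Finset.map_val, Multiset.map_map, ← Finset.univ_disjSum_univ,
    Finset.val_disjSum, Multiset.disjSum, Multiset.map_add, Multiset.map_map, Multiset.map_map]
  rfl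

/-- Since every edge crosses between the classes, the total multiplicity of a bipartite
multigraph may be computed from the block of its multiplicity matrix indexed by the two classes. -/
lemma Multigraph.totMult_eq_sum_block {N p q : ℕ} (H : Multigraph N) (S : Set (Fin N))
    (hS : ∀ v u, 1 ≤ H.m v u → (v ∈ S ↔ u ∉ S)) (e : Fin p ⊕ Fin q ≃ Fin N)
    (hl : ∀ i, e (.inl i) ∈ S) (hr : ∀ j, e (.inr j) ∉ S) :
    H.totMult = ∑ i, ∑ j, (H.m (e (.inl i)) (e (.inr j)) - 1) := by
  classical
  -- The excess of a pair, counted only when its first entry is in `S`.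
  let G : Fin N → Fin N → ℕ := fun v u => if v ∈ S ∧ u ∉ S then H.m v u - 1 else 0
  have hG : ∀ v u, H.m v u - 1 = G v u + G u v := by
    intro v u
    have h1 := hS v u
    have h2 := H.symm v u
    by_cases hv : v ∈ S <;> by_cases hu : u ∈ S <;> simp_all [G]
  have hG0 : ∀ v, G v v = 0 := fun v => by simp [G]
  have h1 : H.totMult = ∑ v, ∑ u, G v u := by
    unfold Multigraph.totMult
    simp only [Finset.sum_filter]
    calc ∑ v, ∑ u, (if v < u then H.m v u - 1 else 0)
        = ∑ v, ∑ u, (if v < u then G v u else 0) + ∑ v, ∑ u, (if v < u then G u v else 0) := by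
          simp only [← Finset.sum_add_distrib]
          refine Finset.sum_congr rfl fun v _ => Finset.sum_congr rfl fun u _ => ?_
          split_ifs
          · exact hG v u
          · rfl
      _ = ∑ v, ∑ u, (if v < u then G v u else 0) + ∑ v, ∑ u, (if u < v then G v u else 0) := by
          rw [Finset.sum_comm (f := fun v u => if v < u then G u v else 0)]
      _ = ∑ v, ∑ u, G v u := by
          simp only [← Finset.sum_add_distrib]
          refine Finset.sum_congr rfl fun v _ => Finset.sum_congr rfl fun u _ => ?_
          rcases lt_trichotomy v u with h | rfl | h
          · simp [h, h.not_gt]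
          · simp [hG0]
          · simp [h, h.not_gt]
  rw [h1, ← e.sum_comp]
  simp only [← e.sum_comp (fun u => G _ u), Fintype.sum_sum_type]
  simp [G, hl, hr]

/-- The bipartite multigraph with a given multiplicity matrix; the first `p` vertices index the
rows and the last `q` the columns. -/
def Multigraph.ofMatrix {p q : ℕ} (m : Fin p → Fin q → ℕ) : Multigraph (p + q) where
  m v u := match finSumFinEquiv.symm v, finSumFinEquiv.symm u with
    | .inl i, .inr j => m i j
    | .inr j, .inl i => m i j
    | _, _ => 0
  symm v u := by
    rcases finSumFinEquiv.symm v with i | i <;> rcases finSumFinEquiv.symm u with j | j <;> rfl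
  loopless v := by
    rcases finSumFinEquiv.symm v with i | i <;> rfl

/-! ### The characterization -/

/-- A degree sequence `d 1, …, d n` has a multigraph
realization whose underlying simple graph is bipartite with total multiplicity
at most `t` iff there is a balanced partition `(a, b)` of `d` such that the
pair `(a ∘ 1^t, b ∘ 1^t)`, obtained by appending `t` copies of `1` to each
side, is bigraphic. -/
theorem stmt2 (n t : ℕ) (ht : 0 < t) (d : ℕ → ℕ)
    (hpos : ∀ i ∈ Finset.Icc 1 n, 0 < d i)
    (hmono : AntitoneOn d (Set.Icc 1 n))
    (heven : Even (∑ i ∈ Finset.Icc 1 n, d i)) :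
    (∃ (N : ℕ) (H : Multigraph N),
        H.Realizes n d ∧ H.Bipartite ∧ H.totMult ≤ t) ↔
      ∃ (p q : ℕ) (a b : ℕ → ℕ), IsBalancedPartition n d p a q b ∧
        Bigraphic (p + t) (q + t) (fun i => if i ≤ p then a i else 1)
          (fun j => if j ≤ q then b j else 1) := by
  constructor
  · rintro ⟨N, H, hd, ⟨S, hS⟩, ht'⟩
    classical
    obtain ⟨p, ⟨eI⟩⟩ := Finite.exists_equiv_fin {v // v ∈ S}
    obtain ⟨q, ⟨eJ⟩⟩ := Finite.exists_equiv_fin {v // v ∉ S}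
    let e : Fin p ⊕ Fin q ≃ Fin N :=
      (Equiv.sumCongr eI.symm eJ.symm).trans (Equiv.sumCompl (· ∈ S))
    have hl : ∀ i, e (.inl i) ∈ S := fun i => (eI.symm i).2
    have hr : ∀ j, e (.inr j) ∉ S := fun j => (eJ.symm j).2
    rw [H.totMult_eq_sum_block S hS e hl hr] at ht'
    let m : Fin p → Fin q → ℕ := fun i j => H.m (e (.inl i)) (e (.inr j))
    have hdl : ∀ i, H.deg (e (.inl i)) = ∑ j, m i j := fun i => by
      have h0 : ∀ i', H.m (e (.inl i)) (e (.inl i')) = 0 := fun i' => by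
        by_contra h
        exact (hS _ _ (Nat.one_le_iff_ne_zero.2 h)).1 (hl i) (hl i')
      rw [Multigraph.deg, ← e.sum_comp, Fintype.sum_sum_type]
      simp [h0, m]
    have hdr : ∀ j, H.deg (e (.inr j)) = ∑ i, m i j := fun j => by
      have h0 : ∀ j', H.m (e (.inr j)) (e (.inr j')) = 0 := fun j' => by
        by_contra h
        exact hr j ((hS _ _ (Nat.one_le_iff_ne_zero.2 h)).2 (hr j'))
      rw [Multigraph.deg, ← e.sum_comp, Fintype.sum_sum_type]
      simp [h0, m, H.symm (e (.inr j))]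
    obtain ⟨a, ha⟩ := exists_seq fun i => ∑ j, m i j
    obtain ⟨b, hb⟩ := exists_seq fun j => ∑ i, m i j
    refine ⟨p, q, a, b, ⟨?_, ?_⟩, ?_⟩
    · rw [← hd, map_univ_val_sum e]
      simp only [map_Icc_one_val, ha, hb, hdl, hdr]
    · simp only [sum_Icc_one, ha, hb]
      exact Finset.sum_comm
    · rw [bigraphic_append_iff]
      simp only [ha, hb]
      exact exists_leafExtension m t ht'
  · rintro ⟨p, q, a, b, ⟨hab, -⟩, hM⟩
    rw [bigraphic_append_iff] at hM
    obtain ⟨M, hM1, hrow, hcol⟩ := hM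
    obtain ⟨m, hma, hmb, hmt⟩ := exists_multigraph_of_leafExtension t M _ _ hM1 hrow hcol
    refine ⟨p + q, .ofMatrix m, ?_, ?_⟩
    · rw [Multigraph.Realizes, ← hab, map_univ_val_sum finSumFinEquiv]
      simp only [map_Icc_one_val, ← hma, ← hmb, Multigraph.deg, Multigraph.ofMatrix]
      simp only [← finSumFinEquiv.sum_comp, Fintype.sum_sum_type, Equiv.symm_apply_apply,
        Finset.sum_const_zero, zero_add, add_zero]
    · have hl : ∀ i : Fin p, finSumFinEquiv (.inl i : Fin p ⊕ Fin q) ∈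
          {v | (finSumFinEquiv.symm v).isLeft} := fun i => by
        rw [Set.mem_ofPred_eq, Equiv.symm_apply_apply]; rfl
      have hr : ∀ j : Fin q, finSumFinEquiv (.inr j : Fin p ⊕ Fin q) ∉
          {v | (finSumFinEquiv.symm v).isLeft} := fun j => by
        rw [Set.mem_ofPred_eq, Equiv.symm_apply_apply]; simp
      have hS : ∀ v u, 1 ≤ (Multigraph.ofMatrix m).m v u →
          (v ∈ {v | (finSumFinEquiv.symm v : Fin p ⊕ Fin q).isLeft} ↔
            u ∉ {v | (finSumFinEquiv.symm v : Fin p ⊕ Fin q).isLeft}) := by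
        intro v u h
        simp only [Set.mem_ofPred_eq]
        rcases hv : finSumFinEquiv.symm v with i | i <;>
          rcases hu : finSumFinEquiv.symm u with j | j <;>
          simp [Multigraph.ofMatrix, hv, hu] at h ⊢
      refine ⟨⟨_, hS⟩, ?_⟩
      rw [Multigraph.totMult_eq_sum_block _ _ hS finSumFinEquiv hl hr]
      simpa only [Multigraph.ofMatrix, Equiv.symm_apply_apply] using hmt
end

section
/- Let d be a degree sequence with a balanced partition (a,b), where a = (a_1,…,a_p) and b = (b_1,…,b_q) are nonincreasing, and let t be a positive integer. Then (a,b) is t-tot-bigraphic if and only if for all ℓ = 1,…,p: ∑_{i=1}^ℓ a_i ≤ ∑_{i=1}^q min{ℓ, b_i} + t. -/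
/-! ### Matrices with prescribed margins -/

lemma exists_le_sum_eq (T : Finset ℕ) (f : ℕ → ℕ) (s : ℕ) (h : s ≤ ∑ j ∈ T, f j) :
    ∃ g : ℕ → ℕ, (∀ j, g j ≤ f j) ∧ ∑ j ∈ T, g j = s := by
  induction s with
  | zero => exact ⟨fun _ => 0, fun _ => Nat.zero_le _, by simp⟩
  | succ s ih =>
    obtain ⟨g, hg, hs⟩ := ih (by omega)
    have hlt : ∑ j ∈ T, g j < ∑ j ∈ T, f j := by omega
    obtain ⟨j, hj, hjlt⟩ := Finset.exists_lt_of_sum_lt hlt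
    refine ⟨fun v => g v + if v = j then 1 else 0, fun v => ?_, ?_⟩
    · have := hg v
      dsimp only
      split_ifs with hv
      · subst hv; omega
      · omega
    · rw [Finset.sum_add_distrib, Finset.sum_ite_eq', if_pos hj, hs]

/-- Any two margins with equal totals are realized by a matrix of natural numbers. -/
lemma exists_fill (S T : Finset ℕ) (u : ℕ → ℕ) : ∀ v : ℕ → ℕ,
    ∑ i ∈ S, u i = ∑ j ∈ T, v j →
    ∃ z : ℕ → ℕ → ℕ, (∀ i ∈ S, ∑ j ∈ T, z i j = u i) ∧ ∀ j ∈ T, ∑ i ∈ S, z i j = v j := by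
  induction S using Finset.induction_on with
  | empty =>
    intro v h
    refine ⟨fun _ _ => 0, by simp, fun j hj => ?_⟩
    have := Finset.sum_eq_zero_iff.1 (h.symm.trans Finset.sum_empty) j hj
    simp [this]
  | insert i S hi ih =>
    intro v h
    rw [Finset.sum_insert hi] at h
    obtain ⟨g, hg, hs⟩ := exists_le_sum_eq T v (u i) (by omega)
    have hsub : ∑ j ∈ T, (v j - g j) + ∑ j ∈ T, g j = ∑ j ∈ T, v j := by
      rw [← Finset.sum_add_distrib]
      exact Finset.sum_congr rfl fun j _ => Nat.sub_add_cancel (hg j)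
    obtain ⟨z, hr, hc⟩ := ih (fun j => v j - g j) (by omega)
    have hne : ∀ w ∈ S, w ≠ i := fun w hw h => hi (h ▸ hw)
    refine ⟨fun w j => if w = i then g j else z w j, fun w hw => ?_, fun j hj => ?_⟩
    · rcases Finset.mem_insert.1 hw with rfl | hw
      · simpa using hs
      · simpa [hne w hw] using hr w hw
    · rw [Finset.sum_insert hi]
      have : ∑ w ∈ S, (if w = i then g j else z w j) = ∑ w ∈ S, z w j :=
        Finset.sum_congr rfl fun w hw => by simp [hne w hw]
      rw [this, hc j hj]
      have := hg j
      simp only [if_true]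
      omega

/-! ### Lowering the deficiency -/

/-- If the deficiency of `r` with respect to `a` exceeds `t` although the partial sums are off by at
most `t`, some surplus row precedes a deficient one. Taking `i` to be the last surplus row before
the deficient row `k`, the partial-sum inequality is strict on `[i, k)`. -/
lemma exists_surplus_deficit (p t : ℕ) (a r : ℕ → ℕ)
    (hP : ∀ l ∈ Finset.Icc 1 p, ∑ i ∈ Finset.Icc 1 l, a i ≤ ∑ i ∈ Finset.Icc 1 l, r i + t)
    (hD : t < ∑ i ∈ Finset.Icc 1 p, (a i - r i)) :
    ∃ i k, 1 ≤ i ∧ i < k ∧ k ≤ p ∧ a i < r i ∧ r k < a k ∧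
      ∀ l, i ≤ l → l < k →
        ∑ i ∈ Finset.Icc 1 l, a i + 1 ≤ ∑ i ∈ Finset.Icc 1 l, r i + t := by
  have hex : ∃ i k, 1 ≤ i ∧ i < k ∧ k ≤ p ∧ a i < r i ∧ r k < a k := by
    -- Otherwise no surplus precedes the last deficient row `k`, so the partial sum up to `k` is short
    -- by the whole deficiency, which exceeds `t`.
    by_contra! hno
    have hne : ((Finset.Icc 1 p).filter fun k => r k < a k).Nonempty := by
      obtain ⟨k, hk, hk'⟩ := Finset.exists_ne_zero_of_sum_ne_zero (ne_of_gt (Nat.zero_lt_of_lt hD))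
      exact ⟨k, Finset.mem_filter.2 ⟨hk, by omega⟩⟩
    obtain ⟨k, hk, hmax⟩ := Finset.exists_max_image _ id hne
    simp only [Finset.mem_filter, Finset.mem_Icc, id] at hk hmax
    have h1 : ∑ i ∈ Finset.Icc 1 p, (a i - r i) = ∑ i ∈ Finset.Icc 1 k, (a i - r i) := by
      symm
      apply Finset.sum_subset (Finset.Icc_subset_Icc_right hk.1.2)
      intro i hi hi'
      simp only [Finset.mem_Icc] at hi hi'
      by_contra h0
      have := hmax i ⟨hi, by omega⟩
      omega
    have h2 : ∑ i ∈ Finset.Icc 1 k, (a i - r i) + ∑ i ∈ Finset.Icc 1 k, r i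
        = ∑ i ∈ Finset.Icc 1 k, a i := by
      rw [← Finset.sum_add_distrib]
      refine Finset.sum_congr rfl fun i hi => Nat.sub_add_cancel ?_
      rw [Finset.mem_Icc] at hi
      rcases hi.2.lt_or_eq with h | rfl
      · by_contra! h0
        have := hno i k hi.1 h hk.1.2 h0
        omega
      · exact hk.2.le
    have := hP k (Finset.mem_Icc.2 hk.1)
    omega
  obtain ⟨i₀, k, hi₀, hik, hkp, hs, hd⟩ := hex
  obtain ⟨i, hi, hmax⟩ := Finset.exists_max_image
    ((Finset.Ico 1 k).filter fun i => a i < r i) id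
    ⟨i₀, Finset.mem_filter.2 ⟨Finset.mem_Ico.2 ⟨hi₀, hik⟩, hs⟩⟩
  simp only [Finset.mem_filter, Finset.mem_Ico, id] at hi hmax
  refine ⟨i, k, hi.1.1, hi.1.2, hkp, hi.2, hd, fun l hil hlk => ?_⟩
  have hsplit : ∀ f : ℕ → ℕ,
      ∑ u ∈ Finset.Icc 1 l, f u + ∑ u ∈ Finset.Ioc l k, f u = ∑ u ∈ Finset.Icc 1 k, f u := by
    intro f
    rw [← Finset.sum_union]
    · congr 1
      ext u
      simp only [Finset.mem_union, Finset.mem_Icc, Finset.mem_Ioc]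
      omega
    · rw [Finset.disjoint_left]
      intro u
      simp only [Finset.mem_Icc, Finset.mem_Ioc]
      omega
  have hlt : ∑ u ∈ Finset.Ioc l k, r u < ∑ u ∈ Finset.Ioc l k, a u := by
    refine Finset.sum_lt_sum (fun u hu => ?_) ⟨k, Finset.mem_Ioc.2 ⟨hlk, le_rfl⟩, hd⟩
    rw [Finset.mem_Ioc] at hu
    rcases hu.2.lt_or_eq with h | rfl
    · by_contra! h0
      have := hmax u ⟨⟨by omega, h⟩, h0⟩
      omega
    · exact hd.le
  have := hP k (Finset.mem_Icc.2 ⟨by omega, hkp⟩)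
  have := hsplit a
  have := hsplit r
  omega

/-- In a 0/1 matrix, a one can be moved within its column from row `i` to row `k` whenever row `i`
has the larger sum. -/
lemma exists_shift (S T : Finset ℕ) (x : ℕ → ℕ → ℕ) (hx : ∀ u v, x u v ≤ 1) (i k : ℕ)
    (hi : i ∈ S) (hk : k ∈ S) (hlt : ∑ v ∈ T, x k v < ∑ v ∈ T, x i v) :
    ∃ y : ℕ → ℕ → ℕ, (∀ u v, y u v ≤ 1) ∧
      (∀ u, ∑ v ∈ T, y u v + (if u = i then 1 else 0)
        = ∑ v ∈ T, x u v + if u = k then 1 else 0) ∧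
      ∀ v, ∑ u ∈ S, y u v = ∑ u ∈ S, x u v := by
  obtain ⟨j, hj, hjlt⟩ := Finset.exists_lt_of_sum_lt hlt
  have hik : i ≠ k := by rintro rfl; omega
  have hxi := hx i j
  let y : ℕ → ℕ → ℕ := fun u v =>
    if v = j then (if u = i then 0 else if u = k then 1 else x u v) else x u v
  have hy : ∀ u v, y u v + (if u = i then if v = j then 1 else 0 else 0)
      = x u v + if u = k then if v = j then 1 else 0 else 0 := by
    intro u v
    by_cases hv : v = j
    · subst hv
      by_cases hu : u = i
      · subst hu
        simp [y, hik]; omega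
      · by_cases hu' : u = k
        · subst hu'
          simp [y, hu]; omega
        · simp [y, hu, hu']
    · simp [y, hv]
  refine ⟨y, fun u v => ?_, fun u => ?_, fun v => ?_⟩
  · have := hx u v
    dsimp only [y]
    split_ifs <;> omega
  · have h := Finset.sum_congr (rfl : T = T) fun v _ => hy u v
    rw [Finset.sum_add_distrib, Finset.sum_add_distrib] at h
    have e : ∀ w, ∑ v ∈ T, (if u = w then if v = j then 1 else 0 else 0)
        = if u = w then 1 else 0 := by
      intro w
      by_cases hw : u = w <;> simp [hw, hj]
    rwa [e, e] at h
  · have h := Finset.sum_congr (rfl : S = S) fun u _ => hy u v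
    rw [Finset.sum_add_distrib, Finset.sum_add_distrib, Finset.sum_ite_eq', Finset.sum_ite_eq',
      if_pos hi, if_pos hk] at h
    omega

/-- Repeated shifting brings the deficiency of the row sums down to `t` without changing the
column sums. The bound `D` on the deficiency drives the induction. -/
lemma exists_small_deficiency (p t : ℕ) (a : ℕ → ℕ) (ha : AntitoneOn a (Set.Icc 1 p))
    (T : Finset ℕ) (D : ℕ) : ∀ x : ℕ → ℕ → ℕ, (∀ u v, x u v ≤ 1) →
    (∀ l ∈ Finset.Icc 1 p,
      ∑ i ∈ Finset.Icc 1 l, a i ≤ ∑ i ∈ Finset.Icc 1 l, ∑ v ∈ T, x i v + t) →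
    ∑ i ∈ Finset.Icc 1 p, (a i - ∑ v ∈ T, x i v) ≤ D →
    ∃ y : ℕ → ℕ → ℕ, (∀ u v, y u v ≤ 1) ∧
      (∀ v, ∑ u ∈ Finset.Icc 1 p, y u v = ∑ u ∈ Finset.Icc 1 p, x u v) ∧
      ∑ i ∈ Finset.Icc 1 p, (a i - ∑ v ∈ T, y i v) ≤ t := by
  induction D with
  | zero => exact fun x hx _ hD => ⟨x, hx, fun _ => rfl, by omega⟩
  | succ D ih =>
    intro x hx hP hD
    by_cases ht : ∑ i ∈ Finset.Icc 1 p, (a i - ∑ v ∈ T, x i v) ≤ t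
    · exact ⟨x, hx, fun _ => rfl, ht⟩
    obtain ⟨i, k, hi, hik, hkp, hs, hd, hslack⟩ :=
      exists_surplus_deficit p t a (fun i => ∑ v ∈ T, x i v) hP (not_le.1 ht)
    have hak : a k ≤ a i := ha ⟨hi, by omega⟩ ⟨by omega, hkp⟩ hik.le
    have hkm : k ∈ Finset.Icc 1 p := Finset.mem_Icc.2 ⟨by omega, hkp⟩
    obtain ⟨y, hy, hrow, hcol⟩ := exists_shift (Finset.Icc 1 p) T x hx i k
      (Finset.mem_Icc.2 ⟨hi, by omega⟩) hkm (by omega)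
    suffices h : _ ∧ _ by
      obtain ⟨z, hz, hzc, hzt⟩ := ih y hy h.1 h.2
      exact ⟨z, hz, fun v => (hzc v).trans (hcol v), hzt⟩
    constructor
    · intro l hl
      have h := Finset.sum_congr (rfl : Finset.Icc 1 l = Finset.Icc 1 l) fun u _ => hrow u
      rw [Finset.sum_add_distrib, Finset.sum_add_distrib, Finset.sum_ite_eq',
        Finset.sum_ite_eq'] at h
      have h1 := hP l hl
      have h2 := hslack l
      simp only [Finset.mem_Icc] at h
      split_ifs at h <;> omega
    · have h : ∑ u ∈ Finset.Icc 1 p, ((a u - ∑ v ∈ T, y u v) + if u = k then 1 else 0)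
          = ∑ u ∈ Finset.Icc 1 p, (a u - ∑ v ∈ T, x u v) := by
        refine Finset.sum_congr rfl fun u _ => ?_
        have := hrow u
        by_cases hu : u = i
        · subst hu
          simp only [if_true, if_neg hik.ne] at this ⊢
          omega
        · by_cases hu' : u = k
          · subst hu'
            simp only [if_true, if_neg hu] at this ⊢
            omega
          · simp only [if_neg hu, if_neg hu'] at this ⊢
            omega
      rw [Finset.sum_add_distrib, Finset.sum_ite_eq', if_pos hkm] at h
      omega

/-- The partial sums of a column of the Ferrers matrix. -/
lemma sum_ferrers (l c : ℕ) :
    ∑ i ∈ Finset.Icc 1 l, (if i ≤ c then 1 else 0) = min l c := by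
  rw [← Finset.card_filter]
  have : (Finset.Icc 1 l).filter (fun i => i ≤ c) = Finset.Icc 1 (min l c) := by
    ext i
    grind
  rw [this, Nat.card_Icc, Nat.add_sub_cancel]

/-! ### The two implications -/

lemma necessity (p q t : ℕ) (a b : ℕ → ℕ) (m : ℕ → ℕ → ℕ) (hm : IsBipMG p q a b m)
    (ht : bipTotMult p q m ≤ t) (l : ℕ) (hl : l ≤ p) :
    ∑ i ∈ Finset.Icc 1 l, a i ≤ (∑ j ∈ Finset.Icc 1 q, min l (b j)) + t := by
  have hsub : Finset.Icc 1 l ⊆ Finset.Icc 1 p := Finset.Icc_subset_Icc_right hl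
  have h1 : ∑ i ∈ Finset.Icc 1 l, a i
      = ∑ j ∈ Finset.Icc 1 q, ∑ i ∈ Finset.Icc 1 l, min (m i j) 1
        + ∑ i ∈ Finset.Icc 1 l, ∑ j ∈ Finset.Icc 1 q, (m i j - 1) := by
    rw [Finset.sum_comm, ← Finset.sum_add_distrib]
    refine Finset.sum_congr rfl fun i hi => ?_
    rw [← hm.1 i (hsub hi), ← Finset.sum_add_distrib]
    exact Finset.sum_congr rfl fun j _ => by omega
  have h2 : ∑ i ∈ Finset.Icc 1 l, ∑ j ∈ Finset.Icc 1 q, (m i j - 1) ≤ bipTotMult p q m :=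
    Finset.sum_le_sum_of_subset hsub
  have h3 : ∑ j ∈ Finset.Icc 1 q, ∑ i ∈ Finset.Icc 1 l, min (m i j) 1
      ≤ ∑ j ∈ Finset.Icc 1 q, min l (b j) := by
    refine Finset.sum_le_sum fun j hj => le_min ?_ ?_
    · calc _ ≤ ∑ i ∈ Finset.Icc 1 l, 1 := Finset.sum_le_sum fun i _ => min_le_right _ _
        _ = l := by simp
    · rw [← hm.2 j hj]
      exact (Finset.sum_le_sum fun i _ => min_le_left _ _).trans
        (Finset.sum_le_sum_of_subset hsub)
  omega

lemma sufficiency (p q t : ℕ) (a b : ℕ → ℕ) (ha : AntitoneOn a (Set.Icc 1 p))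
    (hab : ∑ i ∈ Finset.Icc 1 p, a i = ∑ j ∈ Finset.Icc 1 q, b j)
    (hP : ∀ l ∈ Finset.Icc 1 p,
      ∑ i ∈ Finset.Icc 1 l, a i ≤ (∑ j ∈ Finset.Icc 1 q, min l (b j)) + t) :
    ∃ m : ℕ → ℕ → ℕ, IsBipMG p q a b m ∧ bipTotMult p q m ≤ t := by
  obtain ⟨x, hx, hxc, hxt⟩ := exists_small_deficiency p t a ha (Finset.Icc 1 q) _
    (fun i j => if i ≤ b j then 1 else 0) (fun u v => by split_ifs <;> omega)
    (fun l hl => by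
      rw [Finset.sum_comm]
      simp only [sum_ferrers]
      exact hP l hl) le_rfl
  simp only [sum_ferrers] at hxc
  -- Truncate the surplus rows of `x`: row `i` of `y` has sum `min (a i) (∑ j, x i j)`.
  choose y hyx hys using fun i => exists_le_sum_eq (Finset.Icc 1 q) (x i)
    (min (a i) (∑ j ∈ Finset.Icc 1 q, x i j)) (min_le_right _ _)
  have hyb : ∀ j, ∑ i ∈ Finset.Icc 1 p, y i j ≤ b j := fun j =>
    (Finset.sum_le_sum fun i _ => hyx i j).trans ((hxc j).trans_le (min_le_right _ _))
  have hya : ∀ i, ∑ j ∈ Finset.Icc 1 q, y i j ≤ a i := fun i =>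
    (hys i).trans_le (min_le_left _ _)
  have ea : ∑ i ∈ Finset.Icc 1 p, (a i - ∑ j ∈ Finset.Icc 1 q, y i j)
      + ∑ i ∈ Finset.Icc 1 p, ∑ j ∈ Finset.Icc 1 q, y i j = ∑ i ∈ Finset.Icc 1 p, a i := by
    rw [← Finset.sum_add_distrib]
    exact Finset.sum_congr rfl fun i _ => Nat.sub_add_cancel (hya i)
  have eb : ∑ j ∈ Finset.Icc 1 q, (b j - ∑ i ∈ Finset.Icc 1 p, y i j)
      + ∑ j ∈ Finset.Icc 1 q, ∑ i ∈ Finset.Icc 1 p, y i j = ∑ j ∈ Finset.Icc 1 q, b j := by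
    rw [← Finset.sum_add_distrib]
    exact Finset.sum_congr rfl fun j _ => Nat.sub_add_cancel (hyb j)
  have ec : ∑ i ∈ Finset.Icc 1 p, ∑ j ∈ Finset.Icc 1 q, y i j
      = ∑ j ∈ Finset.Icc 1 q, ∑ i ∈ Finset.Icc 1 p, y i j := Finset.sum_comm
  obtain ⟨z, hzr, hzc⟩ := exists_fill (Finset.Icc 1 p) (Finset.Icc 1 q)
    (fun i => a i - ∑ j ∈ Finset.Icc 1 q, y i j)
    (fun j => b j - ∑ i ∈ Finset.Icc 1 p, y i j) (by omega)
  refine ⟨fun i j => y i j + z i j, ⟨fun i hi => ?_, fun j hj => ?_⟩, ?_⟩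
  · rw [Finset.sum_add_distrib, hzr i hi]
    exact Nat.add_sub_cancel' (hya i)
  · rw [Finset.sum_add_distrib, hzc j hj]
    exact Nat.add_sub_cancel' (hyb j)
  · calc bipTotMult p q (fun i j => y i j + z i j)
        ≤ ∑ i ∈ Finset.Icc 1 p, ∑ j ∈ Finset.Icc 1 q, z i j :=
          Finset.sum_le_sum fun i _ => Finset.sum_le_sum fun j _ => by
            have := hyx i j
            have := hx i j
            dsimp only
            omega
      _ = ∑ i ∈ Finset.Icc 1 p, (a i - ∑ j ∈ Finset.Icc 1 q, x i j) :=
          Finset.sum_congr rfl fun i hi => by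
            rw [hzr i hi, hys i]
            omega
      _ ≤ t := hxt

/-- Let `d` be a degree sequence with a balanced partition
`(a, b)`, where `a` and `b` are nonincreasing, and let `t > 0`. Then `(a, b)`
is `t`-tot-bigraphic iff for all `ℓ = 1, …, p`:
`∑_{i=1}^ℓ a i ≤ ∑_{j=1}^q min ℓ (b j) + t`. -/
theorem stmt3 (n p q t : ℕ) (ht : 0 < t) (d a b : ℕ → ℕ)
    (hpos : ∀ i ∈ Finset.Icc 1 n, 0 < d i)
    (hmono : AntitoneOn d (Set.Icc 1 n))
    (heven : Even (∑ i ∈ Finset.Icc 1 n, d i))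
    (hmonoa : AntitoneOn a (Set.Icc 1 p))
    (hmonob : AntitoneOn b (Set.Icc 1 q))
    (hbp : IsBalancedPartition n d p a q b) :
    (∃ m : ℕ → ℕ → ℕ, IsBipMG p q a b m ∧ bipTotMult p q m ≤ t) ↔
      ∀ ℓ ∈ Finset.Icc 1 p,
        ∑ i ∈ Finset.Icc 1 ℓ, a i ≤ (∑ j ∈ Finset.Icc 1 q, min ℓ (b j)) + t := by
  constructor
  · rintro ⟨m, hm, hmt⟩ ℓ hℓ
    exact necessity p q t a b m hm hmt ℓ (Finset.mem_Icc.1 hℓ).2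
  · exact sufficiency p q t a b hmonoa hbp.2
end

section
/- Let (a,b) be a pair of nonincreasing sequences of positive integers, a = (a_1,…,a_p) and b = (b_1,…,b_q), with ∑a = ∑b. Then the minimum total multiplicity over all bipartite multigraphs with left degrees a and right degrees b equals max{ 0, max_{1 ≤ ℓ ≤ p} ( ∑_{i=1}^ℓ a_i − ∑_{i=1}^q min{ℓ, b_i} ) }. -/
open Finset

/-! ### Maximum 0/1 matrices and alternating paths -/

/-- `x` is, on `I × J`, a 0/1 matrix with row sums at most `a` and column sums at most `b`. Entries
are integers, so that exchanging entries is additive. -/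
def IsSubMG (I J : Finset ℕ) (a b : ℕ → ℕ) (x : ℕ → ℕ → ℤ) : Prop :=
  (∀ i ∈ I, ∀ j ∈ J, x i j = 0 ∨ x i j = 1) ∧ (∀ i ∈ I, ∑ j ∈ J, x i j ≤ a i) ∧
    ∀ j ∈ J, ∑ i ∈ I, x i j ≤ b j

/-- `x` has the largest number of ones among the matrices satisfying `IsSubMG`. -/
def IsMaxSubMG (I J : Finset ℕ) (a b : ℕ → ℕ) (x : ℕ → ℕ → ℤ) : Prop :=
  IsSubMG I J a b x ∧
    ∀ y, IsSubMG I J a b y → ∑ i ∈ I, ∑ j ∈ J, y i j ≤ ∑ i ∈ I, ∑ j ∈ J, x i j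

/-- An alternating walk leads from row `i`, through `n` further rows, to a column with sum less
than `b`: it goes from rows to columns along zeros, and from columns to rows along ones. -/
def Reach (I J : Finset ℕ) (b : ℕ → ℕ) (x : ℕ → ℕ → ℤ) : ℕ → ℕ → Prop
  | 0, i => ∃ j ∈ J, x i j = 0 ∧ ∑ k ∈ I, x k j < b j
  | n + 1, i => ∃ j ∈ J, x i j = 0 ∧ ∃ k ∈ I, x k j = 1 ∧ Reach I J b x n k

/-- Changing column `j` without changing column sums keeps an alternating path, unless the path
goes through column `j`; in that case every row with a zero in column `j` can join the path. -/
lemma reach_of_eq_off_col {I J : Finset ℕ} {b : ℕ → ℕ} {x y : ℕ → ℕ → ℤ} {j : ℕ}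
    (hxy : ∀ u v, v ≠ j → y u v = x u v) (n k : ℕ) (h : Reach I J b x n k) :
    Reach I J b y n k ∨ ∃ t ≤ n, ∀ i, x i j = 0 → Reach I J b x t i := by
  induction n generalizing k with
  | zero =>
    obtain ⟨v, hv, h0, hlt⟩ := h
    by_cases hvj : v = j
    · subst hvj
      exact Or.inr ⟨0, le_rfl, fun i hi => ⟨v, hv, hi, hlt⟩⟩
    · refine Or.inl ⟨v, hv, by rw [hxy _ _ hvj, h0], ?_⟩
      rwa [Finset.sum_congr rfl fun u _ => hxy u v hvj]
  | succ n ih =>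
    obtain ⟨v, hv, h0, k', hk', h1, hr⟩ := h
    by_cases hvj : v = j
    · subst hvj
      exact Or.inr ⟨n + 1, le_rfl, fun i hi => ⟨v, hv, hi, k', hk', h1, hr⟩⟩
    · rcases ih k' hr with hl | ⟨t, ht, hr'⟩
      · exact Or.inl ⟨v, hv, by rw [hxy _ _ hvj, h0], k', hk', by rw [hxy _ _ hvj, h1], hl⟩
      · exact Or.inr ⟨t, by omega, hr'⟩

/-- No augmenting path exists for a matrix of maximum size. Induction on the length of the path,
over all matrices of maximum size: exchanging two entries of the first column of a shortest path
moves the deficiency from its first row to its second one. -/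
lemma not_reach_of_isMax {I J : Finset ℕ} {a b : ℕ → ℕ} (n : ℕ) :
    ∀ x, IsMaxSubMG I J a b x → ∀ i ∈ I, ∑ j ∈ J, x i j < a i → ¬ Reach I J b x n i := by
  induction n using Nat.strong_induction_on with
  | _ n ih =>
    intro x hx i hi hlt hr
    obtain ⟨⟨h01, hrow, hcol⟩, hmax⟩ := hx
    cases n with
    | zero =>
      obtain ⟨j, hj, h0, hjlt⟩ := hr
      set y : ℕ → ℕ → ℤ := fun u v => x u v + if u = i then (if v = j then 1 else 0) else 0 with hy
      have hyrow : ∀ u, ∑ v ∈ J, y u v = ∑ v ∈ J, x u v + if u = i then 1 else 0 := by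
        intro u
        by_cases hu : u = i <;> simp [hy, hu, Finset.sum_add_distrib, hj]
      have hycol : ∀ v, ∑ u ∈ I, y u v = ∑ u ∈ I, x u v + if v = j then 1 else 0 := by
        intro v
        simp [hy, Finset.sum_add_distrib, hi]
      have hfeas : IsSubMG I J a b y := by
        refine ⟨fun u hu v hv => ?_, fun u hu => ?_, fun v hv => ?_⟩
        · have := h01 u hu v hv
          simp only [hy]
          split_ifs with h1 h2
          · subst h1 h2; right; omega
          · simpa using this
          · simpa using this
        · rw [hyrow]
          have := hrow u hu
          split_ifs with h1
          · subst h1; omega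
          · omega
        · rw [hycol]
          have := hcol v hv
          split_ifs with h1
          · subst h1; omega
          · omega
      have h2 := hmax y hfeas
      simp only [hyrow, Finset.sum_add_distrib, Finset.sum_ite_eq', hi, if_true] at h2
      omega
    | succ n =>
      obtain ⟨j, hj, h0, k, hk, h1, hr⟩ := hr
      have hik : i ≠ k := by rintro rfl; omega
      set y : ℕ → ℕ → ℤ := fun u v => x u v +
        ((if u = i then (if v = j then 1 else 0) else 0)
          - if u = k then (if v = j then 1 else 0) else 0) with hy
      have hyrow : ∀ u, ∑ v ∈ J, y u v
          = ∑ v ∈ J, x u v + ((if u = i then 1 else 0) - if u = k then 1 else 0) := by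
        intro u
        by_cases hu : u = i <;> by_cases hu' : u = k <;>
          simp [hy, hu, hu', Finset.sum_add_distrib, hj, hik, hik.symm]
      have hycol : ∀ v, ∑ u ∈ I, y u v = ∑ u ∈ I, x u v := by
        intro v
        simp [hy, Finset.sum_add_distrib, Finset.sum_sub_distrib, hi, hk]
      have hfeas : IsSubMG I J a b y := by
        refine ⟨fun u hu v hv => ?_, fun u hu => ?_, fun v hv => ?_⟩
        · have := h01 u hu v hv
          simp only [hy]
          by_cases hv : v = j
          · subst hv
            by_cases hu : u = i
            · subst hu; simp [hik, h0]
            · by_cases hu' : u = k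
              · subst hu'; simp [hu, h1]
              · simpa [hu, hu'] using this
          · simpa [hv] using this
        · rw [hyrow]
          have := hrow u hu
          by_cases h1 : u = i
          · subst h1; simp [hik]; omega
          · simp only [h1, if_false]; split_ifs <;> omega
        · rw [hycol]
          exact hcol v hv
      have hsize : ∑ u ∈ I, ∑ v ∈ J, y u v = ∑ u ∈ I, ∑ v ∈ J, x u v := by
        rw [Finset.sum_comm, Finset.sum_congr rfl fun v _ => hycol v, Finset.sum_comm]
      have hymax : IsMaxSubMG I J a b y := ⟨hfeas, fun z hz => hsize ▸ hmax z hz⟩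
      have hklt : ∑ v ∈ J, y k v < a k := by
        rw [hyrow]
        have := hrow k hk
        simp [hik.symm]; omega
      rcases reach_of_eq_off_col (y := y) (j := j) (fun u v hv => by simp [hy, hv]) n k hr with
        h | ⟨t, ht, h⟩
      · exact ih n (by omega) y hymax k hk hklt h
      · exact ih t (by omega) x ⟨⟨h01, hrow, hcol⟩, hmax⟩ i hi hlt (h i h0)

lemma exists_isMax (I J : Finset ℕ) (a b : ℕ → ℕ) : ∃ x, IsMaxSubMG I J a b x := by
  obtain ⟨s, ⟨x, hx, hs⟩, hmax⟩ := Int.exists_greatest_of_bdd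
    (P := fun s => ∃ x, IsSubMG I J a b x ∧ ∑ i ∈ I, ∑ j ∈ J, x i j = s)
    ⟨∑ i ∈ I, (a i : ℤ), fun s ⟨x, hx, hs⟩ => hs ▸ Finset.sum_le_sum hx.2.1⟩
    ⟨0, fun _ _ => 0, by simp [IsSubMG], by simp⟩
  exact ⟨x, hx, fun y hy => hs ▸ hmax _ ⟨y, hy, rfl⟩⟩

/-- Some 0/1 matrix attains the value of a cut `(S, T)`. -/
lemma exists_cut (I J : Finset ℕ) (a b : ℕ → ℕ) :
    ∃ x, IsSubMG I J a b x ∧ ∃ S ⊆ I, ∃ T ⊆ J,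
      ∑ i ∈ I, ∑ j ∈ J, x i j
        = ∑ i ∈ I \ S, (a i : ℤ) + (∑ _j ∈ J \ T, (#S : ℤ) + ∑ j ∈ T, (b j : ℤ)) := by
  classical
  obtain ⟨x, hx⟩ := exists_isMax I J a b
  have hno := fun n => not_reach_of_isMax n x hx
  obtain ⟨⟨h01, hrow, hcol⟩, -⟩ := hx
  set S := I.filter fun i => ∀ n, ¬ Reach I J b x n i with hS
  set T := J.filter fun j => ∃ i ∈ S, x i j = 0 with hT
  have hSI : S ⊆ I := Finset.filter_subset _ _
  have hTJ : T ⊆ J := Finset.filter_subset _ _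
  refine ⟨x, ⟨h01, hrow, hcol⟩, S, hSI, T, hTJ, ?_⟩
  have hfullrow : ∀ i ∈ I \ S, ∑ j ∈ J, x i j = a i := by
    intro i hi
    simp only [hS, Finset.mem_sdiff, Finset.mem_filter, not_and, not_forall, not_not] at hi
    obtain ⟨n, hn⟩ := hi.2 hi.1
    exact le_antisymm (hrow i hi.1) (not_lt.1 fun hlt => hno n i hi.1 hlt hn)
  have hfullcol : ∀ j ∈ T, ∑ i ∈ S, x i j = b j := by
    intro j hj
    obtain ⟨hjJ, i, hi, h0⟩ := Finset.mem_filter.1 hj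
    have hir := (Finset.mem_filter.1 hi).2
    have hzero : ∀ k ∈ I, k ∉ S → x k j = 0 := by
      intro k hk hkS
      simp only [hS, Finset.mem_filter, not_and, not_forall, not_not] at hkS
      obtain ⟨n, hn⟩ := hkS hk
      exact (h01 k hk j hjJ).resolve_right fun h1 => hir (n + 1) ⟨j, hjJ, h0, k, hk, h1, hn⟩
    rw [Finset.sum_subset hSI hzero]
    exact le_antisymm (hcol j hjJ) (not_lt.1 fun hlt => hir 0 ⟨j, hjJ, h0, hlt⟩)
  have hones : ∀ j ∈ J \ T, ∑ i ∈ S, x i j = #S := by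
    intro j hj
    obtain ⟨hjJ, hjT⟩ := Finset.mem_sdiff.1 hj
    have : ∀ i ∈ S, x i j = 1 := fun i hi =>
      (h01 i (hSI hi) j hjJ).resolve_left fun h0 => hjT (Finset.mem_filter.2 ⟨hjJ, i, hi, h0⟩)
    rw [Finset.sum_congr rfl this]; simp
  rw [← Finset.sum_sdiff hSI, Finset.sum_congr rfl hfullrow,
    Finset.sum_comm (s := S), ← Finset.sum_sdiff hTJ, Finset.sum_congr rfl hfullcol,
    Finset.sum_congr rfl hones]

/-! ### Filling up to the prescribed degrees -/

/-- Any row and column sums with equal totals are attained by a matrix over `ℕ`. -/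
lemma exists_transport (I J : Finset ℕ) (N : ℕ) :
    ∀ r c : ℕ → ℕ, ∑ i ∈ I, r i = N → ∑ j ∈ J, c j = N →
      ∃ y : ℕ → ℕ → ℕ, (∀ i ∈ I, ∑ j ∈ J, y i j = r i) ∧ ∀ j ∈ J, ∑ i ∈ I, y i j = c j := by
  induction N with
  | zero =>
    intro r c hr hc
    refine ⟨fun _ _ => 0, fun i hi => ?_, fun j hj => ?_⟩
    · simp [Finset.sum_eq_zero_iff.1 hr i hi]
    · simp [Finset.sum_eq_zero_iff.1 hc j hj]
  | succ N ih =>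
    intro r c hr hc
    -- A unit is placed in a row and a column of positive sum, and the rest by induction.
    obtain ⟨i, hi, hri⟩ : ∃ i ∈ I, r i ≠ 0 := Finset.exists_ne_zero_of_sum_ne_zero (by omega)
    obtain ⟨j, hj, hcj⟩ : ∃ j ∈ J, c j ≠ 0 := Finset.exists_ne_zero_of_sum_ne_zero (by omega)
    have key : ∀ (K : Finset ℕ) (f : ℕ → ℕ) (k : ℕ), k ∈ K → f k ≠ 0 → ∑ u ∈ K, f u = N + 1 →
        ∑ u ∈ K, (f u - if u = k then 1 else 0) = N := by
      intro K f k hk hfk hf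
      have : ∑ u ∈ K, (f u - if u = k then 1 else 0) + ∑ u ∈ K, (if u = k then 1 else 0)
          = ∑ u ∈ K, f u := by
        rw [← Finset.sum_add_distrib]
        refine Finset.sum_congr rfl fun u _ => ?_
        split_ifs with h
        · subst h; omega
        · omega
      simp only [Finset.sum_ite_eq', hk, if_true] at this
      omega
    obtain ⟨y, hyr, hyc⟩ := ih _ _ (key I r i hi hri hr) (key J c j hj hcj hc)
    refine ⟨fun u v => y u v + if u = i then (if v = j then 1 else 0) else 0,
      fun u hu => ?_, fun v hv => ?_⟩
    · rw [Finset.sum_add_distrib, hyr u hu]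
      by_cases h : u = i
      · subst h; simp [hj]; omega
      · simp [h]
    · rw [Finset.sum_add_distrib, hyc v hv]
      by_cases h : v = j
      · subst h; simp [hi]; omega
      · simp [h]

/-- Filling up a 0/1 matrix to a multigraph costs at most one unit of total multiplicity for each
missing edge. -/
lemma exists_bipMG_of_isSubMG {p q : ℕ} {a b : ℕ → ℕ} {x : ℕ → ℕ → ℤ}
    (hsum : ∑ i ∈ Icc 1 p, a i = ∑ j ∈ Icc 1 q, b j)
    (hx : IsSubMG (Icc 1 p) (Icc 1 q) a b x) :
    ∃ m, IsBipMG p q a b m ∧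
      (bipTotMult p q m : ℤ) + ∑ i ∈ Icc 1 p, ∑ j ∈ Icc 1 q, x i j ≤ ∑ i ∈ Icc 1 p, (a i : ℤ) := by
  obtain ⟨h01, hrow, hcol⟩ := hx
  set z : ℕ → ℕ → ℕ := fun i j => (x i j).toNat with hz
  have hzx : ∀ i ∈ Icc 1 p, ∀ j ∈ Icc 1 q, x i j = z i j := fun i hi j hj => by
    have := h01 i hi j hj
    simp only [hz]; omega
  have hxr : ∀ i ∈ Icc 1 p, ∑ j ∈ Icc 1 q, x i j = ((∑ j ∈ Icc 1 q, z i j : ℕ) : ℤ) :=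
    fun i hi => by rw [Finset.sum_congr rfl (hzx i hi)]; push_cast; rfl
  have hzrow : ∀ i ∈ Icc 1 p, ∑ j ∈ Icc 1 q, z i j ≤ a i := fun i hi => by
    have := hrow i hi
    rw [hxr i hi] at this
    exact_mod_cast this
  have hzcol : ∀ j ∈ Icc 1 q, ∑ i ∈ Icc 1 p, z i j ≤ b j := fun j hj => by
    have := hcol j hj
    rw [Finset.sum_congr rfl fun i hi => hzx i hi j hj] at this
    exact_mod_cast this
  have e1 : ∑ i ∈ Icc 1 p, (a i - ∑ j ∈ Icc 1 q, z i j) + ∑ i ∈ Icc 1 p, ∑ j ∈ Icc 1 q, z i j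
      = ∑ i ∈ Icc 1 p, a i := by
    rw [← Finset.sum_add_distrib]
    exact Finset.sum_congr rfl fun i hi => Nat.sub_add_cancel (hzrow i hi)
  have e2 : ∑ j ∈ Icc 1 q, (b j - ∑ i ∈ Icc 1 p, z i j) + ∑ i ∈ Icc 1 p, ∑ j ∈ Icc 1 q, z i j
      = ∑ j ∈ Icc 1 q, b j := by
    rw [Finset.sum_comm (s := Icc 1 p), ← Finset.sum_add_distrib]
    exact Finset.sum_congr rfl fun j hj => Nat.sub_add_cancel (hzcol j hj)
  obtain ⟨y, hyr, hyc⟩ := exists_transport (Icc 1 p) (Icc 1 q) _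
    (fun i => a i - ∑ j ∈ Icc 1 q, z i j) (fun j => b j - ∑ i ∈ Icc 1 p, z i j) rfl (by omega)
  refine ⟨fun i j => z i j + y i j, ⟨fun i hi => ?_, fun j hj => ?_⟩, ?_⟩
  · rw [Finset.sum_add_distrib, hyr i hi]
    exact Nat.add_sub_cancel' (hzrow i hi)
  · rw [Finset.sum_add_distrib, hyc j hj]
    exact Nat.add_sub_cancel' (hzcol j hj)
  · have hle : bipTotMult p q (fun i j => z i j + y i j)
        ≤ ∑ i ∈ Icc 1 p, (a i - ∑ j ∈ Icc 1 q, z i j) := by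
      refine Finset.sum_le_sum fun i hi => ?_
      rw [← hyr i hi]
      refine Finset.sum_le_sum fun j hj => ?_
      have h1 := h01 i hi j hj
      have h2 := hzx i hi j hj
      dsimp only
      omega
    rw [Finset.sum_congr rfl hxr]
    have : bipTotMult p q (fun i j => z i j + y i j) + ∑ i ∈ Icc 1 p, ∑ j ∈ Icc 1 q, z i j
        ≤ ∑ i ∈ Icc 1 p, a i := by omega
    exact_mod_cast this

/-! ### The degree bound -/

/-- Among sets of `ℓ` indices, the initial one maximizes the sum of a nonincreasing sequence. -/
lemma sum_le_sum_initial {p : ℕ} {a : ℕ → ℕ} (ha : AntitoneOn a (Set.Icc 1 p))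
    {S : Finset ℕ} (hS : S ⊆ Icc 1 p) : ∑ i ∈ S, a i ≤ ∑ i ∈ Icc 1 #S, a i := by
  have hle : #S ≤ p := by simpa using Finset.card_le_card hS
  have hcard : #(S \ Icc 1 #S) = #(Icc 1 #S \ S) :=
    Finset.card_sdiff_comm (by simp)
  rw [← Finset.sum_inter_add_sum_sdiff S (Icc 1 #S), ← Finset.sum_inter_add_sum_sdiff (Icc 1 #S) S,
    Finset.inter_comm]
  refine Nat.add_le_add_left ?_ _
  calc ∑ i ∈ S \ Icc 1 #S, a i ≤ #(S \ Icc 1 #S) • a #S := by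
        refine Finset.sum_le_card_nsmul _ _ _ fun i hi => ?_
        obtain ⟨hiS, hi'⟩ := Finset.mem_sdiff.1 hi
        have h1 := Finset.mem_Icc.1 (hS hiS)
        have h0 : 0 < #S := Finset.card_pos.2 ⟨i, hiS⟩
        rw [Finset.mem_Icc] at hi'
        exact ha ⟨h0, hle⟩ h1 (by omega)
    _ = #(Icc 1 #S \ S) • a #S := by rw [hcard]
    _ ≤ ∑ i ∈ Icc 1 #S \ S, a i := by
        refine Finset.card_nsmul_le_sum _ _ _ fun i hi => ?_
        have h1 := Finset.mem_Icc.1 (Finset.mem_sdiff.1 hi).1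
        exact ha ⟨h1.1, by omega⟩ ⟨by omega, hle⟩ h1.2

lemma le_bipTotMult {p q : ℕ} {a b : ℕ → ℕ} {m : ℕ → ℕ → ℕ} (hm : IsBipMG p q a b m) {ℓ : ℕ}
    (hℓ : ℓ ≤ p) :
    ∑ i ∈ Icc 1 ℓ, a i ≤ bipTotMult p q m + ∑ j ∈ Icc 1 q, min ℓ (b j) := by
  have hsub : Icc 1 ℓ ⊆ Icc 1 p := Finset.Icc_subset_Icc_right hℓ
  calc ∑ i ∈ Icc 1 ℓ, a i = ∑ i ∈ Icc 1 ℓ, ∑ j ∈ Icc 1 q, m i j :=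
        Finset.sum_congr rfl fun i hi => (hm.1 i (hsub hi)).symm
    _ = ∑ i ∈ Icc 1 ℓ, ∑ j ∈ Icc 1 q, (m i j - 1)
          + ∑ j ∈ Icc 1 q, ∑ i ∈ Icc 1 ℓ, min 1 (m i j) := by
        rw [Finset.sum_comm (s := Icc 1 q), ← Finset.sum_add_distrib]
        refine Finset.sum_congr rfl fun i _ => ?_
        rw [← Finset.sum_add_distrib]
        exact Finset.sum_congr rfl fun j _ => by omega
    _ ≤ _ := by
        refine Nat.add_le_add (Finset.sum_le_sum_of_subset hsub)
          (Finset.sum_le_sum fun j hj => le_min ?_ ?_)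
        · calc ∑ i ∈ Icc 1 ℓ, min 1 (m i j) ≤ ∑ i ∈ Icc 1 ℓ, 1 :=
                Finset.sum_le_sum fun i _ => min_le_left _ _
            _ = ℓ := by simp
        · rw [← hm.2 j hj]
          exact (Finset.sum_le_sum fun i _ => min_le_right _ _).trans
            (Finset.sum_le_sum_of_subset hsub)

/-- For nonincreasing sequences `a` (length `p`) and `b`
(length `q`) of positive integers with equal sums, the minimum total
multiplicity over all bipartite multigraphs with left degrees `a` and right
degrees `b` equals `max{0, max_{1 ≤ ℓ ≤ p} (∑_{i=1}^ℓ a i − ∑_{j=1}^q min ℓ (b j))}`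
(here the truncated subtraction and the `Finset.sup`, whose default value is
`0`, realize the outer `max` with `0`). -/
theorem stmt4 (p q : ℕ) (a b : ℕ → ℕ)
    (hposa : ∀ i ∈ Finset.Icc 1 p, 0 < a i)
    (hposb : ∀ j ∈ Finset.Icc 1 q, 0 < b j)
    (hmonoa : AntitoneOn a (Set.Icc 1 p))
    (hmonob : AntitoneOn b (Set.Icc 1 q))
    (hsum : ∑ i ∈ Finset.Icc 1 p, a i = ∑ j ∈ Finset.Icc 1 q, b j) :
    IsLeast {k : ℕ | ∃ m : ℕ → ℕ → ℕ, IsBipMG p q a b m ∧ bipTotMult p q m = k}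
      ((Finset.Icc 1 p).sup fun ℓ =>
        (∑ i ∈ Finset.Icc 1 ℓ, a i) - ∑ j ∈ Finset.Icc 1 q, min ℓ (b j)) := by
  have hlower : ∀ m : ℕ → ℕ → ℕ, IsBipMG p q a b m → ((Finset.Icc 1 p).sup fun ℓ =>
      (∑ i ∈ Finset.Icc 1 ℓ, a i) - ∑ j ∈ Finset.Icc 1 q, min ℓ (b j)) ≤ bipTotMult p q m :=
    fun m hm => Finset.sup_le fun ℓ hℓ =>
      Nat.sub_le_iff_le_add.2 (le_bipTotMult hm (Finset.mem_Icc.1 hℓ).2)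
  refine ⟨?_, fun k ⟨m, hm, hk⟩ => hk ▸ hlower m hm⟩
  obtain ⟨x, hx, S, hS, T, hT, hsize⟩ := exists_cut (Icc 1 p) (Icc 1 q) a b
  obtain ⟨m, hm, hle⟩ := exists_bipMG_of_isSubMG hsum hx
  refine ⟨m, hm, le_antisymm ?_ (hlower m hm)⟩
  have hmin : ∑ j ∈ Icc 1 q, min #S (b j) ≤ ∑ _j ∈ Icc 1 q \ T, #S + ∑ j ∈ T, b j := by
    rw [← Finset.sum_sdiff hT]
    exact Nat.add_le_add (Finset.sum_le_sum fun j _ => min_le_left _ _)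
      (Finset.sum_le_sum fun j _ => min_le_right _ _)
  have hcut : bipTotMult p q m + (∑ _j ∈ Icc 1 q \ T, #S + ∑ j ∈ T, b j) ≤ ∑ i ∈ S, a i := by
    rw [hsize, ← Finset.sum_sdiff hS] at hle
    zify
    linarith
  have hinit := sum_le_sum_initial hmonoa hS
  have hcard : #S ≤ p := by simpa using Finset.card_le_card hS
  rcases Nat.eq_zero_or_pos #S with h0 | hpos
  · -- The case `ℓ = 0` is not among the indices of the supremum; there no unit is missing.
    rw [Finset.card_eq_zero.1 h0, Finset.sum_empty] at hcut
    omega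
  · refine le_trans ?_ (Finset.le_sup (f := fun ℓ =>
      (∑ i ∈ Finset.Icc 1 ℓ, a i) - ∑ j ∈ Finset.Icc 1 q, min ℓ (b j))
      (Finset.mem_Icc.2 ⟨hpos, hcard⟩))
    omega
end

section
/- Let n ≥ 5 and let d̂ be the sequence consisting of two entries equal to 2n−2 followed by n−2 entries equal to n−1. Then the minimum of TotMult(H) over all multigraph realizations H of d̂ equals n−1; moreover, every multigraph realization H of d̂ with TotMult(H) = n−1 satisfies MaxMult(H) = n. -/
namespace Multigraph

variable {N : ℕ}

/-- Pairs meeting `{a, b}` are counted once on the left, apart from the pair `ab`, which is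
counted twice. -/
theorem excess_add_excess_le (H : Multigraph N) {a b : Fin N} (hab : a ≠ b) :
    ∑ u, (H.m a u - 1) + ∑ u, (H.m b u - 1) ≤ H.totMult + (H.m a b - 1) := by
  have hS := H.two_mul_totMult
  have split : ∀ f : Fin N → ℕ,
      ∑ v, f v = f a + f b + ∑ v ∈ (Finset.univ.erase a).erase b, f v := by
    intro f
    rw [← Finset.add_sum_erase _ f (Finset.mem_univ a),
      ← Finset.add_sum_erase _ f (Finset.mem_erase.2 ⟨hab.symm, Finset.mem_univ b⟩), add_assoc]
  have hle : ∑ v ∈ (Finset.univ.erase a).erase b, ((H.m a v - 1) + (H.m b v - 1)) ≤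
      ∑ v ∈ (Finset.univ.erase a).erase b, ∑ u, (H.m v u - 1) := by
    refine Finset.sum_le_sum fun v _ => ?_
    rw [split fun u => H.m v u - 1, H.symm a v, H.symm b v]
    exact Nat.le_add_right _ _
  rw [Finset.sum_add_distrib] at hle
  rw [split fun v => ∑ u, (H.m v u - 1)] at hS
  have ha := split fun u => H.m a u - 1
  have hb := split fun u => H.m b u - 1
  simp only [H.loopless, H.symm b a] at ha hb
  omega

theorem mult_le_totMult (H : Multigraph N) (a b : Fin N) : H.m a b - 1 ≤ H.totMult := by
  by_cases hab : a = b
  · simp [hab, H.loopless]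
  · have h := H.excess_add_excess_le hab
    have ha : H.m a b - 1 ≤ ∑ u, (H.m a u - 1) :=
      Finset.single_le_sum (f := fun u => H.m a u - 1) (fun _ _ => Nat.zero_le _)
        (Finset.mem_univ b)
    have hb : H.m b a - 1 ≤ ∑ u, (H.m b u - 1) :=
      Finset.single_le_sum (f := fun u => H.m b u - 1) (fun _ _ => Nat.zero_le _)
        (Finset.mem_univ a)
    rw [H.symm b a] at hb
    omega

theorem le_excess (H : Multigraph N) (a : Fin N) :
    H.deg a + 1 ≤ ∑ u, (H.m a u - 1) + N := by
  have h : ∑ u, (H.m a u + if u = a then 1 else 0) ≤ ∑ u, ((H.m a u - 1) + 1) := by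
    refine Finset.sum_le_sum fun u _ => ?_
    by_cases hu : u = a
    · simp [hu, H.loopless]
    · simp only [hu, if_false]
      omega
  simpa [Finset.sum_add_distrib, deg] using h

theorem exists_of_realizes {n : ℕ} (hn : 2 ≤ n) (H : Multigraph N)
    (h : H.Realizes n (fun i => if i ≤ 2 then 2 * n - 2 else n - 1)) :
    N = n ∧ ∃ a b : Fin N, a ≠ b ∧ H.deg a = 2 * n - 2 ∧ H.deg b = 2 * n - 2 := by
  have hcard := congrArg Multiset.card h
  have hcount := congrArg (Multiset.countP (· = 2 * n - 2)) h
  simp only [Multiset.countP_map] at hcount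
  have h2 : 1 < (Finset.univ.filter fun v => H.deg v = 2 * n - 2).card := by
    refine lt_of_lt_of_le ?_ hcount.ge
    change 1 < ((Finset.Icc 1 n).filter fun i =>
      (if i ≤ 2 then 2 * n - 2 else n - 1) = 2 * n - 2).card
    exact Finset.one_lt_card.2 ⟨1, by simp; omega, 2, by simp; omega, by simp⟩
  obtain ⟨a, ha, b, hb, hab⟩ := Finset.one_lt_card.1 h2
  simp only [Finset.mem_filter, Finset.mem_univ, true_and] at ha hb
  exact ⟨by simpa using hcard, a, b, hab, ha, hb⟩

theorem two_mul_le_totMult_add {n : ℕ} (hn : 2 ≤ n) (H : Multigraph n) {a b : Fin n}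
    (hab : a ≠ b) (ha : H.deg a = 2 * n - 2) (hb : H.deg b = 2 * n - 2) :
    2 * (n - 1) ≤ H.totMult + (H.m a b - 1) := by
  have h := H.excess_add_excess_le hab
  have h1 := H.le_excess a
  have h2 := H.le_excess b
  omega

/-- The complete graph on `Fin n` with the edge `01` given multiplicity `n`.  For distinct
vertices, `v + u = 1` in `ℕ` says that `{v, u} = {0, 1}`. -/
def heavyEdge (n : ℕ) : Multigraph n where
  m v u := if v = u then 0 else if v.val + u.val = 1 then n else 1
  symm v u := by simp only [eq_comm (a := v), add_comm v.val]
  loopless v := by simp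

theorem deg_heavyEdge {n : ℕ} (hn : 2 ≤ n) (v : Fin n) :
    (heavyEdge n).deg v = if v.val + 1 ≤ 2 then 2 * n - 2 else n - 1 := by
  have h : ∑ u, ((heavyEdge n).m v u + if v = u then 1 else 0) =
      ∑ u : Fin n, (1 + if v.val + u.val = 1 then n - 1 else 0) := by
    refine Finset.sum_congr rfl fun u _ => ?_
    by_cases hvu : v = u
    · subst hvu
      have : ¬ (v.val + v.val = 1) := by omega
      simp [heavyEdge, this]
    · simp only [heavyEdge, hvu, if_false]
      split_ifs <;> omega
  have h3 : (∑ u : Fin n, if v.val + u.val = 1 then n - 1 else 0) =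
      if v.val + 1 ≤ 2 then n - 1 else 0 := by
    split_ifs with hv
    · rw [Finset.sum_eq_single (⟨1 - v.val, by omega⟩ : Fin n)]
      · rw [if_pos]
        dsimp only
        omega
      · intro u _ hu
        rw [if_neg]
        intro h
        exact hu (Fin.ext (by dsimp only; omega))
      · simp
    · refine Finset.sum_eq_zero fun u _ => ?_
      rw [if_neg]
      omega
  rw [Finset.sum_add_distrib, Finset.sum_add_distrib, h3] at h
  simp only [Finset.sum_ite_eq, Finset.mem_univ, if_true, Finset.sum_const, Finset.card_univ,
    Fintype.card_fin, smul_eq_mul, mul_one] at h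
  unfold deg
  split_ifs at h ⊢ <;> omega

theorem realizes_heavyEdge {n : ℕ} (hn : 2 ≤ n) :
    (heavyEdge n).Realizes n (fun i => if i ≤ 2 then 2 * n - 2 else n - 1) := by
  have hinj : Function.Injective fun v : Fin n => v.val + 1 := by
    intro v u h
    exact Fin.ext (by simpa using h)
  have hI : Finset.Icc 1 n = Finset.univ.map ⟨fun v : Fin n => v.val + 1, hinj⟩ := by
    ext i
    simp only [Finset.mem_Icc, Finset.mem_map, Finset.mem_univ, true_and,
      Function.Embedding.coeFn_mk]
    constructor
    · rintro ⟨h1, h2⟩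
      exact ⟨⟨i - 1, by omega⟩, Nat.sub_add_cancel h1⟩
    · rintro ⟨v, rfl⟩
      omega
  unfold Realizes
  rw [hI, Finset.map_val, Multiset.map_map]
  exact Multiset.map_congr rfl fun v _ => deg_heavyEdge hn v

theorem totMult_heavyEdge {n : ℕ} (hn : 2 ≤ n) : (heavyEdge n).totMult = n - 1 := by
  unfold totMult
  rw [Finset.sum_eq_single (⟨0, by omega⟩ : Fin n),
    Finset.sum_eq_single (⟨1, by omega⟩ : Fin n)]
  · simp [heavyEdge]
  · intro u hu hne
    have : u.val ≠ 1 := fun h => hne (Fin.ext h)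
    simp only [heavyEdge]
    split_ifs <;> omega
  · simp
  · intro v _ hne
    have : v.val ≠ 0 := fun h => hne (Fin.ext h)
    refine Finset.sum_eq_zero fun u hu => ?_
    have hlt : v.val < u.val := (Finset.mem_filter.1 hu).2
    simp only [heavyEdge]
    split_ifs <;> omega
  · simp

end Multigraph

/-- Let `n ≥ 5` and let `d̂` be the sequence with two entries
`2n−2` followed by `n−2` entries `n−1`. The minimum of `TotMult` over all
multigraph realizations of `d̂` equals `n−1`, and every realization attaining
total multiplicity `n−1` has maximum multiplicity `n`. -/
theorem stmt5 (n : ℕ) (hn : 5 ≤ n) :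
    IsLeast {k : ℕ | ∃ (N : ℕ) (H : Multigraph N),
        H.Realizes n (fun i => if i ≤ 2 then 2 * n - 2 else n - 1) ∧
          H.totMult = k} (n - 1) ∧
      ∀ (N : ℕ) (H : Multigraph N),
        H.Realizes n (fun i => if i ≤ 2 then 2 * n - 2 else n - 1) →
          H.totMult = n - 1 → H.maxMult = n := by
  have hn2 : 2 ≤ n := by omega
  refine ⟨⟨⟨n, .heavyEdge n, Multigraph.realizes_heavyEdge hn2,
    Multigraph.totMult_heavyEdge hn2⟩, ?_⟩, ?_⟩
  · rintro k ⟨N, H, hH, rfl⟩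
    obtain ⟨rfl, a, b, hab, ha, hb⟩ := H.exists_of_realizes hn2 hH
    have h := H.two_mul_le_totMult_add hn2 hab ha hb
    have h' := H.mult_le_totMult a b
    omega
  · intro N H hH hT
    obtain ⟨rfl, a, b, hab, ha, hb⟩ := H.exists_of_realizes hn2 hH
    have h := H.two_mul_le_totMult_add hn2 hab ha hb
    apply le_antisymm
    · refine Finset.sup_le fun p _ => ?_
      have := H.mult_le_totMult p.1 p.2
      omega
    · have hm : N ≤ H.m a b := by omega
      exact hm.trans (Finset.le_sup (f := fun p : Fin N × Fin N => H.m p.1 p.2)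
        (Finset.mem_univ (a, b)))
end
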